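/- arXiv:2309.07685 — 3 statements merged into one kernel-verified Lean document; each statement's English description precedes it below -/
import Mathlib

section
/- Let p be a prime with p ≡ 1 (mod 3), write p = A² + 3B² with integers A, B and A ≡ 1 (mod 3), and let a be an integer with p ∤ a. Then a is a cubic residue modulo p (i.e., x³ ≡ a (mod p) is solvable) if and only if V_p(x² + 2a/x) = (2p − 1 + 2A)/3. -/
open Finset

section CubicAux

variable {p : ℕ} [Fact p.Prime]

/-- the quadratic character -/
abbrev qc (p : ℕ) [Fact p.Prime] : MulChar (ZMod p) ℤ := quadraticChar (ZMod p)

noncomputable def SS (p : ℕ) [Fact p.Prime] (a : ZMod p) : ℤ := ∑ r : ZMod p, qc p (1 + a * r ^ 3)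

lemma char_ne_two (h3 : p % 3 = 1) : ringChar (ZMod p) ≠ 2 := by
  rw [ZMod.ringChar_zmod_n]; rintro rfl; omega

lemma two_ne (h3 : p % 3 = 1) : (2 : ZMod p) ≠ 0 := 
  Ring.two_ne_zero (char_ne_two h3)

lemma three_ne (h3 : p % 3 = 1) : (3 : ZMod p) ≠ 0 := by
  have : ((3 : ℕ) : ZMod p) ≠ 0 := by
    rw [Ne, ZMod.natCast_eq_zero_iff]
    intro h
    have := (Nat.prime_dvd_prime_iff_eq (Fact.out : p.Prime) Nat.prime_three).1 h
    subst this; omega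
  exact_mod_cast this

lemma sum_qc (h3 : p % 3 = 1) : ∑ x : ZMod p, qc p x = 0 :=
  quadraticChar_sum_zero (char_ne_two h3)

lemma sum_lin (h3 : p % 3 = 1) (u : ZMod p) :
    ∑ x : ZMod p, qc p (1 + x * u) = if u = 0 then (p : ℤ) else 0 := by
  split_ifs with h
  · subst h; simp [ZMod.card]
  · rw [← sum_qc h3]
    exact Fintype.sum_equiv ((Equiv.mulRight₀ u h).trans (Equiv.addLeft 1)) _ _ (fun x => by simp)

lemma qc_sq {x : ZMod p} (h : x ≠ 0) : qc p x * qc p x = 1 := by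
  have := quadraticChar_sq_one h
  rw [← sq]; exact this

lemma qc_zero : qc p 0 = 0 := by simp

lemma K_sum (h3 : p % 3 = 1) (u v : ZMod p) :
    ∑ x : ZMod p, qc p (1 + x * u) * qc p (1 + x * v) =
      - qc p (u * v) + if u = v then (p : ℤ) else 0 := by
  by_cases hu : u = 0
  · subst hu
    simp only [mul_zero, add_zero, map_one, one_mul, zero_mul]
    rw [sum_lin h3, qc_zero]; simp [eq_comm]
  by_cases hv : v = 0
  · subst hv
    simp only [mul_zero, add_zero, map_one, mul_one]
    rw [sum_lin h3, qc_zero]; simp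
  have key : ∀ x, qc p (1 + x * u) * qc p (1 + x * v) =
      if x = -v⁻¹ then 0 else qc p ((1 + x * u) / (1 + x * v)) := by
    intro x
    split_ifs with h
    · subst h; simp [hv]
    · have hx : 1 + x * v ≠ 0 := by
        intro h0; apply h; field_simp; linear_combination h0
      have : 1 + x * u = (1 + x * u) / (1 + x * v) * (1 + x * v) := by field_simp
      conv_lhs => rw [this]
      rw [map_mul, mul_assoc, qc_sq hx, mul_one]
  by_cases huv : u = v
  · subst huv
    have : ∀ x, qc p (1 + x * u) * qc p (1 + x * u) = 1 - if x = -u⁻¹ then 1 else 0 := by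
      intro x
      split_ifs with h
      · subst h; simp [hv]
      · rw [qc_sq]; simp
        intro h0; apply h; field_simp; linear_combination h0
    simp only [this, sum_sub_distrib]
    rw [map_mul, qc_sq hu]; simp [ZMod.card]; ring
  · simp only [key, huv, if_false, add_zero]
    rw [← sum_filter_add_sum_filter_not univ (fun x => x = -v⁻¹)]
    have e1 : ∑ x with x = -v⁻¹, (if x = -v⁻¹ then (0:ℤ) else qc p ((1 + x * u) / (1 + x * v))) = 0 := by
      apply sum_eq_zero; intro x hx; simp at hx; simp [hx]
    have e2 : ∑ x with ¬ x = -v⁻¹, (if x = -v⁻¹ then (0:ℤ) else qc p ((1 + x * u) / (1 + x * v))) 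
       = ∑ y with ¬ y = u / v, qc p y := by
      refine sum_bij' (fun x _ => (1 + x * u) / (1 + x * v)) (fun y _ => (y - 1) / (u - y * v)) ?_ ?_ ?_ ?_ ?_
      · intro x hx
        simp only [mem_filter, mem_univ, true_and] at hx ⊢
        have hx' : 1 + x * v ≠ 0 := by
          intro h0; apply hx; field_simp; linear_combination h0
        intro h; rw [div_eq_div_iff hx' hv] at h
        apply huv; linear_combination -h
      · intro y hy
        simp only [mem_filter, mem_univ, true_and] at hy ⊢
        have hy' : u - y * v ≠ 0 := by
          intro h0; apply hy; field_simp; linear_combination -h0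
        intro h; field_simp at h
        apply huv; linear_combination h
      · intro x hx
        simp only [mem_filter, mem_univ, true_and] at hx ⊢
        have hx' : 1 + x * v ≠ 0 := by
          intro h0; apply hx; field_simp; linear_combination h0
        have huv' : u - v ≠ 0 := sub_ne_zero.2 huv
        have e1 : (1 + x * u) / (1 + x * v) - 1 = x * (u - v) / (1 + x * v) := by field_simp; ring
        have e2 : u - (1 + x * u) / (1 + x * v) * v = (u - v) / (1 + x * v) := by field_simp; ring
        rw [e1, e2]; field_simp
      · intro y hy
        simp only [mem_filter, mem_univ, true_and] at hy ⊢
        have hy' : u - y * v ≠ 0 := by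
          intro h0; apply hy; field_simp; linear_combination -h0
        have huv' : u - v ≠ 0 := sub_ne_zero.2 huv
        have e1 : 1 + (y - 1) / (u - y * v) * u = y * (u - v) / (u - y * v) := by field_simp; ring
        have e2 : 1 + (y - 1) / (u - y * v) * v = (u - v) / (u - y * v) := by field_simp; ring
        rw [e1, e2]; field_simp
      · intro x hx
        simp only [mem_filter, mem_univ, true_and] at hx
        simp [hx]
    rw [e1, e2]
    have := sum_filter_add_sum_filter_not univ (fun y => y = u / v) (fun y => qc p y)
    rw [sum_qc h3, filter_eq'] at this
    simp only [mem_univ, if_true, sum_singleton] at this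
    have e3 : qc p (u * v) = qc p (u / v) := by
      have : u * v = u / v * (v * v) := by field_simp
      rw [this, map_mul, map_mul _ v v, qc_sq hv, mul_one]
    rw [e3]; linarith

lemma sum_sq (h3 : p % 3 = 1) :
    ∑ x, (SS p x) ^ 2 = p * ∑ r : ZMod p, ((#{s : ZMod p | s ^ 3 = r ^ 3} : ℕ) : ℤ) := by
  have : ∀ x, SS p x ^ 2 = ∑ r : ZMod p, ∑ s : ZMod p, qc p (1 + x * r ^ 3) * qc p (1 + x * s ^ 3) := by
    intro x; rw [SS, sq, sum_mul_sum]
  simp only [this]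
  rw [sum_comm]
  have h2 : ∀ r : ZMod p, ∑ x, ∑ s : ZMod p, qc p (1 + x * r ^ 3) * qc p (1 + x * s ^ 3) =
      p * ((#{s : ZMod p | s ^ 3 = r ^ 3} : ℕ) : ℤ) := by
    intro r
    rw [sum_comm]
    simp only [K_sum h3, sum_add_distrib]
    have : ∀ s : ZMod p, qc p (r ^ 3 * s ^ 3) = qc p r * qc p s := by
      intro s
      have q : ∀ s : ZMod p, qc p (s ^ 3) = qc p s := by
        intro s
        by_cases h : s = 0
        · subst h; simp
        · rw [pow_succ, sq, map_mul, map_mul, qc_sq h, one_mul]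
      rw [map_mul, q, q]
    simp only [this, sum_neg_distrib, ← mul_sum, sum_qc h3]
    rw [← sum_filter]
    simp [eq_comm, mul_comm]
  simp only [h2, mul_sum]

lemma sum_SS (h3 : p % 3 = 1) : ∑ x, SS p x = p := by
  simp only [SS]
  rw [sum_comm]
  simp only [sum_lin h3]
  simp

lemma SS_zero : SS p 0 = p := by simp [SS, ZMod.card]

lemma SS_mul_cube (a t : ZMod p) (ht : t ≠ 0) : SS p (a * t ^ 3) = SS p a := by
  simp only [SS]
  exact Fintype.sum_equiv (Equiv.mulLeft₀ t ht) _ _ (fun x => by simp [mul_pow, mul_assoc])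


/-- the cubic residue symbol `x ^ ((p-1)/3)` -/
def ee (p : ℕ) (x : ZMod p) : ZMod p := x ^ ((p - 1) / 3)

lemma ee_mul (x y : ZMod p) : ee p (x * y) = ee p x * ee p y := mul_pow _ _ _

lemma three_mul_m (h3 : p % 3 = 1) : (p - 1) / 3 * 3 = p - 1 := by omega

lemma ee_cube (h3 : p % 3 = 1) {x : ZMod p} (hx : x ≠ 0) : ee p x ^ 3 = 1 := by
  rw [ee, ← pow_mul, three_mul_m h3, ZMod.pow_card_sub_one_eq_one hx]

lemma ee_of_cube (h3 : p % 3 = 1) {x : ZMod p} (hx : x ≠ 0) : ee p (x ^ 3) = 1 := by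
  rw [ee, ← pow_mul, mul_comm, three_mul_m h3, ZMod.pow_card_sub_one_eq_one hx]

lemma exists_gen (p : ℕ) [Fact p.Prime] : ∃ g : ZMod p, g ≠ 0 ∧ orderOf g = p - 1 ∧ ∀ x : ZMod p, x ≠ 0 → ∃ k : ℕ, g ^ k = x := by
  obtain ⟨g, hg⟩ := IsCyclic.exists_generator (α := (ZMod p)ˣ)
  refine ⟨g, g.ne_zero, ?_, ?_⟩
  · rw [orderOf_units, orderOf_eq_card_of_forall_mem_zpowers hg, Nat.card_eq_fintype_card, ZMod.card_units]
  · intro x hx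
    have := hg (Units.mk0 x hx)
    rw [← mem_powers_iff_mem_zpowers] at this
    obtain ⟨k, hk⟩ := this
    refine ⟨k, ?_⟩
    have := congrArg Units.val hk
    simpa using this

lemma cube_of_ee (h3 : p % 3 = 1) {x : ZMod p} (hx : x ≠ 0) (h : ee p x = 1) :
    ∃ y, y ≠ 0 ∧ y ^ 3 = x := by
  obtain ⟨g, hg0, ho, hg⟩ := exists_gen p
  obtain ⟨k, rfl⟩ := hg x hx
  rw [ee, ← pow_mul] at h
  have h1 := orderOf_dvd_of_pow_eq_one h
  have hm := three_mul_m h3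
  generalize (p - 1) / 3 = m at h1 hm
  rw [ho, ← hm, mul_comm k] at h1
  have hp := (Fact.out : p.Prime).two_le
  have h2 : 3 ∣ k := Nat.dvd_of_mul_dvd_mul_left (by omega) h1
  obtain ⟨j, rfl⟩ := h2
  exact ⟨g ^ j, pow_ne_zero _ hg0, by rw [← pow_mul, mul_comm]⟩

lemma exists_noncube (h3 : p % 3 = 1) : ∃ g : ZMod p, g ≠ 0 ∧ ee p g ≠ 1 := by
  obtain ⟨g, hg0, ho, hg⟩ := exists_gen p
  refine ⟨g, hg0, fun h => ?_⟩
  have h1 := orderOf_dvd_of_pow_eq_one h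
  have hp := (Fact.out : p.Prime).two_le
  rw [ho] at h1
  have := Nat.le_of_dvd (by omega) h1
  omega

lemma om_rel (h3 : p % 3 = 1) {g : ZMod p} (hg : g ≠ 0) (h : ee p g ≠ 1) :
    ee p g ^ 2 + ee p g + 1 = 0 := by
  have h1 := ee_cube h3 hg
  have : (ee p g - 1) * (ee p g ^ 2 + ee p g + 1) = 0 := by linear_combination h1
  exact (mul_eq_zero.1 this).resolve_left (sub_ne_zero.2 h)

lemma cubes_set (h3 : p % 3 = 1) {w : ZMod p} (hw : w ^ 2 + w + 1 = 0) {y : ZMod p} (hy : y ≠ 0) :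
    #{s : ZMod p | s ^ 3 = y ^ 3} = 3 := by
  have h3' := three_ne h3
  have hw1 : w ≠ 1 := by rintro rfl; apply h3'; linear_combination hw
  have hw0 : w ≠ 0 := by rintro rfl; simp at hw
  have : ({s : ZMod p | s ^ 3 = y ^ 3} : Finset (ZMod p)) = {y, w * y, w ^ 2 * y} := by
    ext s
    simp only [mem_filter, mem_univ, true_and, mem_insert, mem_singleton]
    constructor
    · intro h
      have : (s - y) * ((s - w * y) * (s - w ^ 2 * y)) = 0 := by
        linear_combination h + (- (w - 1) * y ^ 3 + s * y ^ 2 * w  - s ^ 2 * y ) * hw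
      rcases mul_eq_zero.1 this with h | h
      · left; linear_combination h
      rcases mul_eq_zero.1 h with h | h
      · right; left; linear_combination h
      · right; right; linear_combination h
    · have hw3 : w ^ 3 = 1 := by linear_combination (w - 1) * hw
      rintro (rfl | rfl | rfl)
      · rfl
      · rw [mul_pow, hw3, one_mul]
      · rw [mul_pow, ← pow_mul, mul_comm 2 3, pow_mul, hw3]; ring
  rw [this, card_eq_three]
  refine ⟨y, w * y, w ^ 2 * y, ?_, ?_, ?_, rfl⟩
  · intro h; apply hw1; apply mul_right_cancel₀ hy; linear_combination -h
  · intro h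
    have h4 : w ^ 2 = 1 := by apply mul_right_cancel₀ hy; linear_combination -h
    rw [h4] at hw
    have : w = -2 := by linear_combination hw
    rw [this] at h4; apply h3'; linear_combination h4
  · intro h; apply hw1; apply mul_right_cancel₀ hy; apply mul_left_cancel₀ hw0; linear_combination -h

lemma n_count (h3 : p % 3 = 1) {w : ZMod p} (hw : w ^ 2 + w + 1 = 0) {x : ZMod p} (hx : x ≠ 0) :
    #{s : ZMod p | s ≠ 0 ∧ s ^ 3 = x} = if ee p x = 1 then 3 else 0 := by
  split_ifs with h
  · obtain ⟨y, hy, rfl⟩ := cube_of_ee h3 hx h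
    refine Eq.trans ?_ (cubes_set h3 hw hy)
    congr 1; ext s; simp only [mem_filter, mem_univ, true_and, and_iff_right_iff_imp]
    rintro h rfl; apply hx; rw [← h]; simp
  · rw [card_eq_zero, filter_eq_empty_iff]
    rintro s - ⟨hs, rfl⟩
    exact h (ee_of_cube h3 hs)

lemma sum_cubes (h3 : p % 3 = 1) {w : ZMod p} (hw : w ^ 2 + w + 1 = 0) (h : ZMod p → ℤ) :
    ∑ t with t ≠ 0, h (t ^ 3) = ∑ x with x ≠ 0, (if ee p x = 1 then 3 else 0) * h x := by
  rw [← sum_fiberwise_of_maps_to (s := univ.filter fun t : ZMod p => t ≠ 0)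
    (t := univ.filter fun t : ZMod p => t ≠ 0) (g := fun t => t ^ 3)]
  · apply sum_congr rfl
    intro x hx
    simp only [mem_filter, mem_univ, true_and] at hx
    have := n_count h3 hw hx
    rw [filter_filter]
    rw [sum_congr rfl (g := fun _ => h x)]
    · rw [sum_const, this]; split_ifs <;> simp
    · intro t ht; simp at ht; rw [ht.2]
  · intro t ht; simp at ht ⊢; exact ht

lemma sum_cubes' (h3 : p % 3 = 1) {w : ZMod p} (hw : w ^ 2 + w + 1 = 0) (h : ZMod p → ℤ)
    {g : ZMod p} (hg : g ≠ 0) :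
    ∑ t with t ≠ 0, h (g * t ^ 3) = ∑ x with x ≠ 0, (if ee p x = ee p g then 3 else 0) * h x := by
  rw [sum_cubes h3 hw (fun x => h (g * x))]
  refine sum_bij' (fun x _ => g * x) (fun y _ => g⁻¹ * y) ?_ ?_ ?_ ?_ ?_
  · intro x hx; simp at hx ⊢; exact ⟨hg, hx⟩
  · intro x hx; simp at hx ⊢; exact ⟨hg, hx⟩
  · intro x _; field_simp
  · intro x _; field_simp
  · intro x _
    have : ee p (g * x) = ee p g ↔ ee p x = 1 := by
      rw [ee_mul]
      exact mul_eq_left₀ (pow_ne_zero _ hg)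
    simp only [this]

lemma sum_three (h3 : p % 3 = 1) {g : ZMod p} (hg : g ≠ 0) (hg1 : ee p g ≠ 1) (h : ZMod p → ℤ)
    (hinv : ∀ a t, t ≠ 0 → h (a * t ^ 3) = h a) :
    3 * ∑ x with x ≠ 0, h x = (p - 1) * (h 1 + h g + h (g ^ 2)) := by
  have hw := om_rel h3 hg hg1
  have hc : ((#{x : ZMod p | x ≠ 0} : ℕ) : ℤ) = p - 1 := by
    rw [filter_ne', card_erase_of_mem (mem_univ _), card_univ, ZMod.card]
    have := (Fact.out : p.Prime).one_lt
    push_cast [Nat.cast_sub this.le]; rfl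
  have a0 : ∀ k : ZMod p, ∑ t with t ≠ 0, h (k * t ^ 3) = (p - 1) * h k := by
    intro k
    rw [sum_congr rfl (g := fun _ => h k), sum_const, nsmul_eq_mul, hc]
    intro t ht; simp at ht; exact hinv _ _ ht
  have a1 := sum_cubes' h3 hw h (one_ne_zero)
  have a2 := sum_cubes' h3 hw h hg
  have a3 := sum_cubes' h3 hw h (pow_ne_zero 2 hg)
  rw [a0] at a1 a2 a3
  rw [mul_add, mul_add, a1, a2, a3, ← sum_add_distrib, ← sum_add_distrib, mul_sum]
  apply sum_congr rfl
  intro x hx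
  simp only [mem_filter, mem_univ, true_and] at hx
  rw [← add_mul, ← add_mul]
  congr 1
  have e1 : ee p (1 : ZMod p) = 1 := one_pow _
  have e2 : ee p (g ^ 2) = ee p g ^ 2 := by rw [sq, ee_mul, sq]
  rw [e1, e2]
  set w := ee p g with hwd
  have hc := ee_cube h3 hx
  set z := ee p x
  have hw0 : w ≠ 0 := pow_ne_zero _ hg
  have n1 : w ^ 2 ≠ w := by
    intro h; apply hg1; apply mul_left_cancel₀ hw0; linear_combination h
  have n2 : w ^ 2 ≠ 1 := by
    intro h4
    rw [h4] at hw
    have : w = -2 := by linear_combination hw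
    rw [this] at h4; apply three_ne h3; linear_combination h4
  have : (z - 1) * ((z - w) * (z - w ^ 2)) = 0 := by
    linear_combination hc + (- (w - 1) + z * w  - z ^ 2 ) * hw
  rcases mul_eq_zero.1 this with h | h
  · have : z = 1 := by linear_combination h
    rw [this]; simp [hg1.symm, n2.symm]
  rcases mul_eq_zero.1 h with h | h
  · have : z = w := by linear_combination h
    rw [this]; simp [hg1, n1.symm]
  · have : z = w ^ 2 := by linear_combination h
    rw [this]; simp [n2, n1]

lemma SS_sum_zero (h3 : p % 3 = 1) {g : ZMod p} (hg : g ≠ 0) (hg1 : ee p g ≠ 1) :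
    SS p 1 + SS p g + SS p (g ^ 2) = 0 := by
  have h := sum_three h3 hg hg1 (SS p) (fun a t ht => SS_mul_cube a t ht)
  have h1 := sum_filter_add_sum_filter_not univ (fun x : ZMod p => x ≠ 0) (SS p)
  simp only [not_not, filter_eq', mem_univ, if_true, sum_singleton, SS_zero, sum_SS h3] at h1
  have h2 : ∑ x with x ≠ 0, SS p x = 0 := by linarith
  rw [h2] at h
  have := (Fact.out : p.Prime).one_lt
  have h5 : (p : ℤ) - 1 ≠ 0 := by omega
  have h6 := mul_eq_zero.1 (h.symm.trans (mul_zero _))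
  exact h6.resolve_left h5

lemma SS_sum_sq (h3 : p % 3 = 1) {g : ZMod p} (hg : g ≠ 0) (hg1 : ee p g ≠ 1) :
    SS p 1 ^ 2 + SS p g ^ 2 + SS p (g ^ 2) ^ 2 = 6 * p := by
  have h := sum_three h3 hg hg1 (fun x => SS p x ^ 2) (fun a t ht => by simp only [SS_mul_cube a t ht])
  have h1 := sum_filter_add_sum_filter_not univ (fun x : ZMod p => x ≠ 0) (fun x => SS p x ^ 2)
  have hc : ((#{x : ZMod p | x ≠ 0} : ℕ) : ℤ) = p - 1 := by
    rw [filter_ne', card_erase_of_mem (mem_univ _), card_univ, ZMod.card]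
    have := (Fact.out : p.Prime).one_lt
    push_cast [Nat.cast_sub this.le]; rfl
  have h7 : ∑ r : ZMod p, ((#{s : ZMod p | s ^ 3 = r ^ 3} : ℕ) : ℤ) = 3 * (p - 1) + 1 := by
    rw [← sum_filter_add_sum_filter_not univ (fun x : ZMod p => x ≠ 0)]
    congr 1
    · rw [sum_congr rfl (g := fun _ => 3)]
      · rw [sum_const, nsmul_eq_mul, hc, mul_comm]
      · intro r hr; simp only [mem_filter, mem_univ, true_and] at hr
        rw [cubes_set h3 (om_rel h3 hg hg1) hr]; rfl
    · simp [filter_eq']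
  simp only [not_not, filter_eq', mem_univ, if_true, sum_singleton, SS_zero, sum_sq h3, h7] at h1
  have h2 : ∑ x with x ≠ 0, SS p x ^ 2 = 2 * p * (p - 1) := by linarith
  rw [h2] at h
  have := (Fact.out : p.Prime).one_lt
  have h5 : (p : ℤ) - 1 ≠ 0 := by omega
  apply mul_left_cancel₀ h5
  linear_combination -h

lemma SS_one_mod3 (h3 : p % 3 = 1) : SS p 1 % 3 = 1 := by
  obtain ⟨g, hg, hg1⟩ := exists_noncube h3
  have := sum_cubes h3 (om_rel h3 hg hg1) (fun x => qc p (1 + x))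
  have h1 := sum_filter_add_sum_filter_not univ (fun x : ZMod p => x ≠ 0) (fun x => qc p (1 + 1 * x ^ 3))
  simp only [one_mul, not_not, filter_eq', mem_univ, if_true, sum_singleton, this] at h1
  have h2 : SS p 1 = 3 * (∑ x with x ≠ 0, (if ee p x = 1 then 1 else 0) * qc p (1 + x)) + 1 := by
    rw [SS]; simp only [one_mul]; rw [← h1, mul_sum]
    congr 1
    · apply sum_congr rfl; intro x _; split_ifs <;> simp
    · simp
  omega

lemma SS_one_even (h3 : p % 3 = 1) : SS p 1 % 2 = 0 := by
  obtain ⟨g, hg, hg1⟩ := exists_noncube h3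
  have h1 : ∀ x : ZMod p, qc p x = 1 - (if x = 0 then 1 else 0) - 2 * (if qc p x = -1 then 1 else 0) := by
    intro x
    by_cases h : x = 0
    · subst h; simp
    · rcases quadraticChar_dichotomy h with h' | h' <;> simp [h, h', qc]
  have h2 : SS p 1 = ∑ r : ZMod p, (1 - (if 1 + r ^ 3 = 0 then 1 else 0) - 2 * (if qc p (1 + r ^ 3) = -1 then 1 else 0)) := by
    rw [SS]; apply sum_congr rfl; intro r _; rw [one_mul]; exact h1 _
  rw [sum_sub_distrib, sum_sub_distrib, ← mul_sum] at h2
  have h4 := cubes_set h3 (om_rel h3 hg hg1) (y := (-1 : ZMod p)) (by simp)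
  have h5 : ∑ r : ZMod p, (if 1 + r ^ 3 = 0 then (1:ℤ) else 0) = 3 := by
    rw [← sum_filter, sum_const, nsmul_eq_mul, mul_one]
    refine Eq.trans ?_ (congrArg (Nat.cast : ℕ → ℤ) h4)
    congr 2; ext r; simp only [mem_filter, mem_univ, true_and]
    constructor
    · intro h; linear_combination h
    · intro h; linear_combination h
  rw [h5] at h2
  simp only [sum_const, card_univ, ZMod.card, nsmul_eq_mul, mul_one] at h2
  have hodd : p % 2 = 1 := by
    rcases (Fact.out : p.Prime).eq_two_or_odd with h | h
    · subst h; omega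
    · exact h
  omega

lemma uniq_rep (A B A' B' : ℤ) (h : (p : ℤ) = A ^ 2 + 3 * B ^ 2) (h' : (p : ℤ) = A' ^ 2 + 3 * B' ^ 2)
    (hA : A % 3 = 1) (hA' : A' % 3 = 1) : A = A' := by
  have hp : Prime (p : ℤ) := Nat.prime_iff_prime_int.1 Fact.out
  have hp0 : (p : ℤ) ≠ 0 := hp.ne_zero
  have hd : (p : ℤ) ∣ (A' * B - A * B') * (A' * B + A * B') :=
    ⟨B ^ 2 - B' ^ 2, by linear_combination (B'^2) * h - B^2 * h'⟩
  have main : ∀ C : ℤ, (p : ℤ) = A' ^ 2 + 3 * C ^ 2 → (p : ℤ) ∣ A' * B - A * C → A = A' := by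
    rintro C hC ⟨k, hk⟩
    have e : (p : ℤ) ^ 2 = (A * A' + 3 * B * C) ^ 2 + 3 * (p * k) ^ 2 := by
      rw [← hk]; linear_combination (p : ℤ) * h + (A^2+3*B^2) * hC
    have hk0 : k = 0 := by
      by_contra hk0
      have : 1 ≤ k ^ 2 := by have := sq_pos_of_ne_zero hk0; omega
      have : 0 < (p : ℤ) ^ 2 := by positivity
      nlinarith [sq_nonneg (A * A' + 3 * B * C)]
    subst hk0
    have e2 : ((p : ℤ) - (A * A' + 3 * B * C)) * (p + (A * A' + 3 * B * C)) = 0 := by linear_combination e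
    have e3 : A' * p = A * (A * A' + 3 * B * C) := by linear_combination A' * h + 3 * B * hk
    rcases mul_eq_zero.1 e2 with e | e
    · apply mul_right_cancel₀ hp0; linear_combination -e3 + A * e
    · have : A' = -A := by apply mul_right_cancel₀ hp0; linear_combination e3 + A * e
      omega
  rcases hp.dvd_or_dvd hd with hh | hh
  · exact main B' h' hh
  · exact main (-B') (by linear_combination h') (by rwa [mul_neg, sub_neg_eq_add])

lemma SS_main (h3 : p % 3 = 1) (A B : ℤ) (h : (p : ℤ) = A ^ 2 + 3 * B ^ 2) (hA : A % 3 = 1) 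
    {g : ZMod p} (hg : g ≠ 0) (hg1 : ee p g ≠ 1) : SS p 1 = -2 * A ∧ SS p g ≠ -2 * A := by
  have s0 := SS_sum_zero h3 hg hg1
  have s2 := SS_sum_sq h3 hg hg1
  have m3 := SS_one_mod3 h3
  have m2 := SS_one_even h3
  generalize SS p 1 = T at *
  generalize SS p g = U at *
  generalize SS p (g ^ 2) = W at *
  have hW : W = -T - U := by linarith
  subst hW
  have hT : T = -2 * A := by
    obtain ⟨A', hA'⟩ : ∃ A', T = -2 * A' := ⟨-(T / 2), by omega⟩
    subst hA'
    have q : U ^ 2 - 2 * A' * U + 4 * A' ^ 2 = 3 * p := by linarith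
    have q2 : (U - A') ^ 2 = 3 * (p - A' ^ 2) := by linarith
    have d3 : (3 : ℤ) ∣ U - A' := Int.prime_three.dvd_of_dvd_pow ⟨_, q2⟩
    obtain ⟨M, hM⟩ := d3
    rw [hM] at q2
    rw [uniq_rep (p := p) A B A' M h (by linarith) hA (by omega)]
  refine ⟨hT, ?_⟩
  rintro rfl
  subst hT
  have : (p : ℤ) = 4 * A ^ 2 := by linarith
  have h2 : (2 : ℤ) ∣ p := ⟨2 * A ^ 2, by linarith⟩
  have hodd : p % 2 = 1 := by
    rcases (Fact.out : p.Prime).eq_two_or_odd with h | h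
    · subst h; omega
    · exact h
  omega


lemma local_count (h3 : p % 3 = 1) (c b : ZMod p) (hc : c ≠ 0) :
    3 * (if ∃ x : ZMod p, x ^ 3 + c = b * x then 1 else 0) +
      #{q : ZMod p × ZMod p | q.1 * q.2 * (q.1 + q.2) = c ∧ q.1 ^ 3 + c = b * q.1} =
      3 * #{x : ZMod p | x ^ 3 + c = b * x} := by
  by_cases hex : ∃ x : ZMod p, x ^ 3 + c = b * x
  swap
  · have e1 : #{x : ZMod p | x ^ 3 + c = b * x} = 0 := by
      rw [card_eq_zero, filter_eq_empty_iff]; intro x _ h; exact hex ⟨x, h⟩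
    have e2 : #{q : ZMod p × ZMod p | q.1 * q.2 * (q.1 + q.2) = c ∧ q.1 ^ 3 + c = b * q.1} = 0 := by
      rw [card_eq_zero, filter_eq_empty_iff]; rintro q _ ⟨-, h⟩; exact hex ⟨_, h⟩
    rw [e1, e2]; simp [hex]
  rw [if_pos hex]
  by_cases hpair : ∃ q : ZMod p × ZMod p, q.1 * q.2 * (q.1 + q.2) = c ∧ q.1 ^ 3 + c = b * q.1
  · obtain ⟨⟨x, y⟩, h1, h2⟩ := hpair
    simp only at h1 h2
    have hx0 : x ≠ 0 := by rintro rfl; apply hc; rw [← h1]; ring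
    have hy0 : y ≠ 0 := by rintro rfl; apply hc; rw [← h1]; ring
    obtain ⟨z, hz⟩ : ∃ z, z = -x - y := ⟨_, rfl⟩
    have hcz : c = - (x * y * z) := by rw [← h1, hz]; ring
    have hb : b = x ^ 2 + x * y + y ^ 2 := by
      apply mul_right_cancel₀ hx0; linear_combination -h2 - h1
    have hfac : ∀ t : ZMod p, t ^ 3 + c = b * t ↔ t = x ∨ t = y ∨ t = z := by
      intro t
      have : t ^ 3 + c = b * t ↔ (t - x) * ((t - y) * (t - z)) = 0 := by
        rw [hb, hcz, hz]
        constructor <;> intro h <;> linear_combination h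
      rw [this]; simp [sub_eq_zero]
    have e1 : ({t : ZMod p | t ^ 3 + c = b * t} : Finset (ZMod p)) = {x, y, z} := by
      ext t; simp [hfac]
    have e2 : ({q : ZMod p × ZMod p | q.1 * q.2 * (q.1 + q.2) = c ∧ q.1 ^ 3 + c = b * q.1} :
        Finset (ZMod p × ZMod p)) = {(x, y), (y, x), (x, z), (z, x), (y, z), (z, y)} := by
      ext ⟨s, t⟩
      simp only [mem_filter, mem_univ, true_and, mem_insert, mem_singleton, Prod.mk.injEq, hfac]
      constructor
      · rintro ⟨h, rfl | rfl | rfl⟩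
        · have : (t - y) * (t - z) = 0 := by
            apply mul_left_cancel₀ hx0; rw [hz]; linear_combination h - h1
          rcases mul_eq_zero.1 this with h | h <;> simp [sub_eq_zero.1 h]
        · have : (t - x) * (t - z) = 0 := by
            apply mul_left_cancel₀ hy0; rw [hz]; linear_combination h - h1
          rcases mul_eq_zero.1 this with h | h <;> simp [sub_eq_zero.1 h]
        · have hs0 : s ≠ 0 := by rintro rfl; apply hc; rw [hcz]; ring
          have : (t - x) * (t - y) = 0 := by
            apply mul_left_cancel₀ hs0
            have hx : x = - s - y := by linear_combination hz
            rw [hx] at h1 ⊢; linear_combination h - h1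
          rcases mul_eq_zero.1 this with h | h <;> simp [sub_eq_zero.1 h]
      · rw [hz] 
        rintro (⟨rfl, rfl⟩ | ⟨rfl, rfl⟩ | ⟨rfl, rfl⟩ | ⟨rfl, rfl⟩ | ⟨rfl, rfl⟩ | ⟨rfl, rfl⟩) <;>
          refine ⟨by linear_combination h1, by simp⟩
    rw [e1, e2]
    have hne : ¬ (x = y ∧ y = z) := by
      rintro ⟨rfl, rfl⟩
      have : 3 * x = 0 := by linear_combination hz
      exact (mul_ne_zero (three_ne h3) hx0) this
    by_cases hxy : x = y
    · subst hxy
      have hxz : x ≠ z := fun h => hne ⟨rfl, h⟩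
      have f1 : ({(x, x), (x, x), (x, z), (z, x), (x, z), (z, x)} : Finset (ZMod p × ZMod p)) =
          {(x, x), (x, z), (z, x)} := by ext; simp only [mem_insert, mem_singleton]; tauto
      rw [f1]
      simp [card_insert_of_notMem, hxz, hxz.symm]
    · by_cases hxz : x = z
      · subst hxz
        have f1 : ({(x, y), (y, x), (x, x), (x, x), (y, x), (x, y)} : Finset (ZMod p × ZMod p)) =
          {(x, x), (x, y), (y, x)} := by ext; simp only [mem_insert, mem_singleton]; tauto
        have f2 : ({x, y, x} : Finset (ZMod p)) = {x, y} := by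
          ext; simp only [mem_insert, mem_singleton]; tauto
        rw [f1, f2]
        have hyx := Ne.symm hxy
        simp [card_insert_of_notMem, hxy, hyx]
      · by_cases hyz : y = z
        · subst hyz
          have f1 : ({(x, y), (y, x), (x, y), (y, x), (y, y), (y, y)} : Finset (ZMod p × ZMod p)) =
            {(y, y), (x, y), (y, x)} := by ext; simp only [mem_insert, mem_singleton]; tauto
          rw [f1]
          have hyx := Ne.symm hxy
          simp [card_insert_of_notMem, hxy, hyx]
        · have a1 := Ne.symm hxy
          have a2 := Ne.symm hxz
          have a3 := Ne.symm hyz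
          simp [card_insert_of_notMem, hxy, hxz, hyz, a1, a2, a3]
  · obtain ⟨x, hx⟩ := hex
    have hx0 : x ≠ 0 := by rintro rfl; apply hc; linear_combination hx
    have e2 : #{q : ZMod p × ZMod p | q.1 * q.2 * (q.1 + q.2) = c ∧ q.1 ^ 3 + c = b * q.1} = 0 := by
      rw [card_eq_zero, filter_eq_empty_iff]; rintro q _ h; exact hpair ⟨_, h⟩
    have e1 : #{x : ZMod p | x ^ 3 + c = b * x} = 1 := by
      rw [card_eq_one]
      refine ⟨x, ?_⟩
      ext t; simp only [mem_filter, mem_univ, true_and, mem_singleton]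
      constructor
      · intro h
        by_contra hne
        apply hpair
        refine ⟨(x, t), ?_, hx⟩
        apply mul_left_cancel₀ (sub_ne_zero.2 hne)
        simp only
        linear_combination x * h - t * hx
      · rintro rfl; exact hx
    rw [e1, e2]

lemma M_count (h3 : p % 3 = 1) (a : ZMod p) (ha : a ≠ 0) :
    ((#{q : ZMod p × ZMod p | q.1 * q.2 * (q.1 + q.2) = 2 * a} : ℕ) : ℤ) = p - 2 + SS p a := by
  have h2 := two_ne h3
  have e1 : #{q : ZMod p × ZMod p | q.1 * q.2 * (q.1 + q.2) = 2 * a} =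
      #{q : ZMod p × ZMod p | q.1 ≠ 0 ∧ q.2 ^ 2 = 1 + a * q.1 ^ 3} := by
    refine card_bij' (fun q _ => (-2 / (q.1 + q.2), (q.2 - q.1) / (q.1 + q.2)))
      (fun q _ => (-(1 - q.2) / q.1, -(1 + q.2) / q.1)) ?_ ?_ ?_ ?_
    · rintro ⟨x, y⟩ h
      simp only [mem_filter, mem_univ, true_and] at h ⊢
      have hu : x + y ≠ 0 := by
        intro h0; rw [h0, mul_zero] at h; exact (mul_ne_zero h2 ha) h.symm
      refine ⟨div_ne_zero (neg_ne_zero.2 h2) hu, ?_⟩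
      field_simp
      linear_combination (-4) * h
    · rintro ⟨r, w⟩ h
      simp only [mem_filter, mem_univ, true_and] at h ⊢
      obtain ⟨hr, h⟩ := h
      field_simp
      linear_combination 2 * h
    · rintro ⟨x, y⟩ h
      simp only [mem_filter, mem_univ, true_and] at h ⊢
      have hu : x + y ≠ 0 := by
        intro h0; rw [h0, mul_zero] at h; exact (mul_ne_zero h2 ha) h.symm
      ext
      · simp only; field_simp; ring
      · simp only; field_simp; ring
    · rintro ⟨r, w⟩ h
      simp only [mem_filter, mem_univ, true_and] at h ⊢
      obtain ⟨hr, h⟩ := h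
      have e : -(1 - w) / r + -(1 + w) / r = -2 / r := by field_simp; ring
      rw [e]
      ext
      · simp only; field_simp
      · simp only; field_simp; ring
  rw [e1]
  have e2 : (#{q : ZMod p × ZMod p | q.1 ≠ 0 ∧ q.2 ^ 2 = 1 + a * q.1 ^ 3}) =
      ∑ r with r ≠ 0, #{w : ZMod p | w ^ 2 = 1 + a * r ^ 3} := by
    rw [card_eq_sum_card_fiberwise (f := Prod.fst) (t := univ.filter fun r : ZMod p => r ≠ 0)]
    · apply sum_congr rfl
      intro r hr
      simp only [mem_filter, mem_univ, true_and] at hr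
      refine card_bij' (fun q _ => q.2) (fun w _ => (r, w)) ?_ ?_ ?_ ?_
      · rintro ⟨s, w⟩ h; simp at h ⊢; rw [h.1.2, h.2]
      · intro w h; simp at h ⊢; exact ⟨hr, h⟩
      · rintro ⟨s, w⟩ h; simp at h ⊢; exact h.2.symm
      · intro w h; rfl
    · intro q hq; simp at hq ⊢; exact hq.1
  rw [e2]
  have e3 : ∀ d : ZMod p, ((#{w : ZMod p | w ^ 2 = d} : ℕ) : ℤ) = qc p d + 1 := by
    intro d
    rw [← quadraticChar_card_sqrts (char_ne_two h3) d]
    congr 2; ext w; simp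
  push_cast
  simp only [e3]
  have h1 := sum_filter_add_sum_filter_not univ (fun x : ZMod p => x ≠ 0) (fun x => qc p (1 + a * x ^ 3) + 1)
  simp only [not_not, filter_eq', mem_univ, if_true, sum_singleton] at h1
  rw [sum_add_distrib (s := univ)] at h1
  simp only [sum_const, card_univ, ZMod.card, nsmul_eq_mul, mul_one] at h1
  rw [SS]
  norm_num at h1 ⊢
  linarith

lemma V_count (h3 : p % 3 = 1) (a : ZMod p) (ha : a ≠ 0) :
    3 * ((#{b : ZMod p | ∃ x : ZMod p, x ^ 3 + 2 * a = b * x} : ℕ) : ℤ) = 2 * p - 1 - SS p a := by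
  have hc : 2 * a ≠ 0 := mul_ne_zero (two_ne h3) ha
  have h := sum_congr (s₁ := (univ : Finset (ZMod p))) rfl (fun b _ => local_count h3 (2 * a) b hc)
  rw [sum_add_distrib, ← mul_sum, ← mul_sum, ← card_filter] at h
  have hM := M_count h3 a ha
  have hx0 : ∀ x b : ZMod p, x ^ 3 + 2 * a = b * x → x ≠ 0 := by
    rintro x b h rfl; apply hc; linear_combination h
  have e1 : ∑ b : ZMod p, #{q : ZMod p × ZMod p | q.1 * q.2 * (q.1 + q.2) = 2 * a ∧ q.1 ^ 3 + 2 * a = b * q.1}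
     = #{q : ZMod p × ZMod p | q.1 * q.2 * (q.1 + q.2) = 2 * a} := by
    rw [card_eq_sum_card_fiberwise (f := fun q => (q.1 ^ 3 + 2 * a) / q.1) (t := univ) (by simp)]
    apply sum_congr rfl
    intro b _
    rw [filter_filter]
    congr 1; ext ⟨x, y⟩
    simp only [mem_filter, mem_univ, true_and, and_congr_right_iff]
    intro h
    have : x ≠ 0 := by rintro rfl; apply hc; rw [← h]; ring
    rw [div_eq_iff this]
  have e2 : ∑ b : ZMod p, #{x : ZMod p | x ^ 3 + 2 * a = b * x} = p - 1 := by
    have : #{x : ZMod p | x ≠ 0} = p - 1 := by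
      rw [filter_ne', card_erase_of_mem (mem_univ _), card_univ, ZMod.card]
    rw [← this, card_eq_sum_card_fiberwise (f := fun x => (x ^ 3 + 2 * a) / x) (t := univ) (by simp)]
    apply sum_congr rfl
    intro b _
    rw [filter_filter]
    congr 1; ext x
    simp only [mem_filter, mem_univ, true_and]
    constructor
    · intro h; exact ⟨hx0 _ _ h, by rw [div_eq_iff (hx0 _ _ h)]; exact h⟩
    · rintro ⟨h0, h⟩; rwa [div_eq_iff h0] at h
  rw [e1, e2] at h
  have := (Fact.out : p.Prime).one_lt
  omega

end CubicAux

theorem stmt_3 (p : ℕ) (hp : p.Prime) (hp1 : p % 3 = 1)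
    (A B : ℤ) (hpAB : (p : ℤ) = A ^ 2 + 3 * B ^ 2) (hA : A % 3 = 1)
    (a : ℤ) (ha : ¬ (p : ℤ) ∣ a) :
    (∃ x : ℤ, x ^ 3 ≡ a [ZMOD (p : ℤ)]) ↔
      3 * (((Finset.range p).filter (fun b : ℕ =>
      ∃ x ∈ Finset.Icc 1 (p - 1),
        (x : ℤ) ^ 3 + (2 * a) ≡ (b : ℤ) * (x : ℤ) [ZMOD (p : ℤ)])).card : ℤ) = 2 * (p : ℤ) - 1 + 2 * A := by
  haveI : Fact p.Prime := ⟨hp⟩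
  have ha' : (a : ZMod p) ≠ 0 := by rwa [Ne, ZMod.intCast_zmod_eq_zero_iff_dvd]
  have hV : ((Finset.range p).filter (fun b : ℕ =>
      ∃ x ∈ Finset.Icc 1 (p - 1),
        (x : ℤ) ^ 3 + (2 * a) ≡ (b : ℤ) * (x : ℤ) [ZMOD (p : ℤ)])).card =
      #{b : ZMod p | ∃ x : ZMod p, x ^ 3 + 2 * (a : ZMod p) = b * x} := by
    refine card_bij' (fun b _ => (b : ZMod p)) (fun b _ => b.val) ?_ ?_ ?_ ?_
    · intro b hb
      simp only [mem_filter, mem_univ, true_and] at hb ⊢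
      obtain ⟨-, x, -, h⟩ := hb
      have := (ZMod.intCast_eq_intCast_iff _ _ _).2 h
      push_cast at this
      exact ⟨x, this⟩
    · intro b hb
      simp only [mem_filter, mem_univ, true_and] at hb ⊢
      obtain ⟨x, h⟩ := hb
      refine ⟨mem_range.2 (ZMod.val_lt b), x.val, ?_, ?_⟩
      · have hx0 : x ≠ 0 := by
          rintro rfl; apply mul_ne_zero (two_ne hp1) ha'; linear_combination h
        have := ZMod.val_lt x
        have := (ZMod.val_ne_zero x).2 hx0
        rw [mem_Icc]; omega
      · rw [← ZMod.intCast_eq_intCast_iff]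
        push_cast
        simpa using h
    · intro b hb
      simp only [mem_filter, mem_range] at hb
      exact ZMod.val_cast_of_lt hb.1
    · intro b _; simp
  rw [hV, V_count hp1 _ ha']
  have hS : (∃ x : ℤ, x ^ 3 ≡ a [ZMOD (p : ℤ)]) ↔ ee p (a : ZMod p) = 1 := by
    constructor
    · rintro ⟨x, h⟩
      have h := (ZMod.intCast_eq_intCast_iff _ _ _).2 h
      push_cast at h
      rw [← h]
      apply ee_of_cube hp1
      rintro h0; apply ha'; rw [← h, h0]; simp
    · intro h
      obtain ⟨y, -, hy⟩ := cube_of_ee hp1 ha' h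
      refine ⟨y.val, ?_⟩
      rw [← ZMod.intCast_eq_intCast_iff]
      push_cast
      simpa using hy
  rw [hS]
  constructor
  · intro h
    obtain ⟨g, hg, hg1⟩ := exists_noncube hp1
    have := (SS_main hp1 A B hpAB hA hg hg1).1
    obtain ⟨y, hy0, hy⟩ := cube_of_ee hp1 ha' h
    rw [← hy, ← one_mul (y ^ 3), SS_mul_cube _ _ hy0, this]; ring
  · intro h
    by_contra hne
    exact (SS_main hp1 A B hpAB hA ha' hne).2 (by linarith)
end

section
/- Let p be a prime with p ≡ 1 (mod 3), write p = A² + 3B² with integers A, B and A ≡ 1 (mod 3), and let a be an integer with p ∤ a. If a^((p−1)/3) ≡ 1 (mod p), then V_p(x + a/(2x²)) = (2p − 1 + 2A)/3; if a^((p−1)/3) ≡ (−1 + A·B⁻¹)/2 (mod p), then V_p(x + a/(2x²)) = (2p − 1 − A + 3B)/3; and if a^((p−1)/3) ≡ (−1 − A·B⁻¹)/2 (mod p), then V_p(x + a/(2x²)) = (2p − 1 − A − 3B)/3. -/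
open Finset in
/-- The cubic character-type sum. -/
noncomputable def cubT (p : ℕ) [Fact p.Prime] (u : ZMod p) : ℤ :=
  ∑ x : ZMod p, quadraticChar (ZMod p) (1 + u * x ^ 3)

lemma aux_char (p : ℕ) [hp : Fact p.Prime] (hp1 : p % 3 = 1) : ringChar (ZMod p) ≠ 2 := by
  rw [ZMod.ringChar_zmod_n]; omega

lemma aux_p7 (p : ℕ) [hp : Fact p.Prime] (hp1 : p % 3 = 1) : 7 ≤ p ∧ p % 2 = 1 := by
  have h := hp.out
  have h2 := h.two_le
  have h3 : p % 2 = 1 := h.eq_two_or_odd.resolve_left (by omega)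
  refine ⟨?_, h3⟩
  omega

lemma aux_two (p : ℕ) [hp : Fact p.Prime] (hp1 : p % 3 = 1) : (2 : ZMod p) ≠ 0 :=
  Ring.two_ne_zero (aux_char p hp1)

lemma aux_three (p : ℕ) [hp : Fact p.Prime] (hp1 : p % 3 = 1) : (3 : ZMod p) ≠ 0 := by
  have : ((3 : ℕ) : ZMod p) ≠ 0 := by
    rw [Ne, ZMod.natCast_eq_zero_iff]
    intro h
    have := Nat.le_of_dvd (by norm_num) h
    have := aux_p7 p hp1
    omega
  exact_mod_cast this

/-- a generator -/
lemma aux_gen (p : ℕ) [hp : Fact p.Prime] :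
    ∃ g : ZMod p, g ≠ 0 ∧ (∀ u : ZMod p, u ≠ 0 → ∃ k : ℕ, u = g ^ k) ∧
      (∀ i : ℕ, g ^ i = 1 → (p - 1) ∣ i) := by
  obtain ⟨g, hg⟩ := IsCyclic.exists_generator (α := (ZMod p)ˣ)
  refine ⟨g, g.ne_zero, ?_, ?_⟩
  · intro u hu
    have := hg (Units.mk0 u hu)
    rw [← mem_powers_iff_mem_zpowers] at this
    obtain ⟨k, hk⟩ := this
    refine ⟨k, ?_⟩
    have := congrArg Units.val hk
    simpa using this.symm
  · intro i hi
    have h1 : g ^ i = 1 := by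
      ext; simpa using hi
    have h2 := orderOf_dvd_of_pow_eq_one h1
    rw [orderOf_eq_card_of_forall_mem_zpowers hg, Nat.card_eq_fintype_card, ZMod.card_units] at h2
    exact h2

lemma cubT_cube (p : ℕ) [hp : Fact p.Prime] (u c : ZMod p) (hc : c ≠ 0) :
    cubT p (u * c ^ 3) = cubT p u := by
  unfold cubT
  refine Fintype.sum_bijective (fun x => c * x) (mulLeft_bijective₀ c hc) _ _ ?_
  intro x
  congr 1; ring

lemma cubT_zero (p : ℕ) [hp : Fact p.Prime] : cubT p 0 = p := by
  simp [cubT, ZMod.card]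

lemma sum_pow_zero (p : ℕ) [hp : Fact p.Prime] (i : ℕ) (hi : ¬ (p - 1) ∣ i) :
    ∑ x : ZMod p, x ^ i = 0 := by
  obtain ⟨g, hg0, -, hg⟩ := aux_gen p
  have h1 : ∑ x : ZMod p, x ^ i = ∑ x : ZMod p, (g * x) ^ i :=
    (Fintype.sum_bijective (fun x => g * x) (mulLeft_bijective₀ g hg0) _ _ (fun x => rfl)).symm
  simp_rw [mul_pow] at h1
  rw [← Finset.mul_sum] at h1
  have h2 : g ^ i ≠ 1 := fun h => hi (hg i h)
  have h3 : (g ^ i - 1) * ∑ x : ZMod p, x ^ i = 0 := by linear_combination - h1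
  exact (mul_eq_zero.mp h3).resolve_left (sub_ne_zero.mpr h2)

lemma cubT_modp (p : ℕ) [hp : Fact p.Prime] (hp1 : p % 3 = 1) (u : ZMod p) :
    ((cubT p u : ℤ) : ZMod p) = ((cubT p 1 : ℤ) : ZMod p) * u ^ ((p - 1) / 3) := by
  obtain ⟨h7, hodd⟩ := aux_p7 p hp1
  have key : ∀ u : ZMod p, ((cubT p u : ℤ) : ZMod p) =
      ((∑ x : ZMod p, (x ^ 3) ^ ((p - 1) / 3)) * ((p / 2).choose ((p - 1) / 3) : ZMod p)) *
        u ^ ((p - 1) / 3) := by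
    intro u
    unfold cubT
    push_cast
    simp_rw [quadraticChar_eq_pow_of_char_ne_two' (aux_char p hp1), ZMod.card, add_comm (1 : ZMod p),
      add_pow]
    rw [Finset.sum_comm, Finset.sum_eq_single ((p - 1) / 3)]
    · rw [Finset.sum_mul, Finset.sum_mul]
      refine Finset.sum_congr rfl fun x _ => ?_
      rw [mul_pow]; ring
    · intro j hj hjn
      have hj' : j ≤ p / 2 := by simpa [Nat.lt_succ_iff] using hj
      have : ∑ x : ZMod p, (x ^ 3) ^ j = 0 := by
        rcases Nat.eq_zero_or_pos j with rfl | hjp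
        · simp
        · simp_rw [← pow_mul]
          apply sum_pow_zero
          rintro ⟨c, hc⟩
          have hc2 : c < 2 := by
            by_contra hcc
            have : (p - 1) * 2 ≤ (p - 1) * c := Nat.mul_le_mul_left _ (by omega)
            omega
          interval_cases c <;> omega
      have h2 : ∀ x : ZMod p, (u * x ^ 3) ^ j * 1 ^ (p / 2 - j) * ((p / 2).choose j : ZMod p) =
          (u ^ j * ((p / 2).choose j : ZMod p)) * (x ^ 3) ^ j := by
        intro x; rw [mul_pow]; ring
      simp_rw [h2]
      rw [← Finset.mul_sum, this, mul_zero]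
    · intro h
      exfalso; apply h; rw [Finset.mem_range]; omega
  rw [key u, key 1, one_pow, mul_one]

lemma aux_omega (p : ℕ) [hp : Fact p.Prime] (hp1 : p % 3 = 1) :
    ∃ w : ZMod p, w ^ 2 + w + 1 = 0 ∧ w ≠ 1 := by
  obtain ⟨h7, -⟩ := aux_p7 p hp1
  obtain ⟨g, hg0, -, hg⟩ := aux_gen p
  have h1 : g ^ ((p - 1) / 3) ≠ 1 := by
    intro h
    have := Nat.le_of_dvd (by omega) (hg _ h)
    omega
  refine ⟨g ^ ((p - 1) / 3), ?_, h1⟩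
  have h3 : (g ^ ((p - 1) / 3)) ^ 3 = 1 := by
    rw [← pow_mul, Nat.div_mul_cancel (by omega)]
    exact ZMod.pow_card_sub_one_eq_one hg0
  refine (mul_eq_zero.mp (?_ : (g ^ ((p - 1) / 3) - 1) * _ = 0)).resolve_left (sub_ne_zero.mpr h1)
  linear_combination h3

open Finset in
lemma cube_fib (p : ℕ) [hp : Fact p.Prime] (hp1 : p % 3 = 1) (x : ZMod p) (hx : x ≠ 0) :
    #{y : ZMod p | y ^ 3 = x ^ 3} = 3 := by
  obtain ⟨w, hw, hw1⟩ := aux_omega p hp1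
  have h3 := aux_three p hp1
  have hw0 : w ≠ 0 := by rintro rfl; simp at hw
  have hww : w ^ 2 ≠ 1 := by
    intro h
    have h4 : w = -2 := by linear_combination hw - h
    rw [h4] at hw
    apply h3; linear_combination hw
  have : ({y : ZMod p | y ^ 3 = x ^ 3} : Finset (ZMod p)) = {x, w * x, w ^ 2 * x} := by
    ext y
    simp only [mem_filter, mem_univ, true_and, mem_insert, mem_singleton]
    constructor
    · intro h
      have : (y - x) * ((y - w * x) * (y - w ^ 2 * x)) = 0 := by
        linear_combination h + (y * x * (x - y) + (w - 1) * x ^ 2 * (y - x)) * hw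
      rcases mul_eq_zero.mp this with h | h
      · left; exact sub_eq_zero.mp h
      rcases mul_eq_zero.mp h with h | h
      · right; left; exact sub_eq_zero.mp h
      · right; right; exact sub_eq_zero.mp h
    · rintro (rfl | rfl | rfl)
      · rfl
      · linear_combination x ^ 3 * (w - 1) * hw
      · linear_combination x ^ 3 * (w - 1) * (w ^ 3 + 1) * hw
  rw [this, card_eq_three]
  refine ⟨x, w * x, w ^ 2 * x, ?_, ?_, ?_, rfl⟩
  · intro h
    exact hw1 (mul_right_cancel₀ hx (by linear_combination -h))
  · intro h
    exact hww (mul_right_cancel₀ hx (by linear_combination -h))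
  · intro h
    have := mul_right_cancel₀ hx h
    exact hw1 (mul_left_cancel₀ hw0 (by linear_combination -this))

open Finset in
lemma cubT_mod3 (p : ℕ) [hp : Fact p.Prime] (hp1 : p % 3 = 1) (u : ZMod p) :
    (3 : ℤ) ∣ cubT p u - 1 := by
  unfold cubT
  rw [← Finset.add_sum_erase _ _ (mem_univ (0 : ZMod p))]
  simp only [ne_eq, OfNat.ofNat_ne_zero, not_false_eq_true, zero_pow, mul_zero, add_zero, map_one,
    add_sub_cancel_left]
  rw [Finset.sum_comp (fun v => quadraticChar (ZMod p) (1 + u * v)) (fun x : ZMod p => x ^ 3)]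
  apply Finset.dvd_sum
  intro v hv
  obtain ⟨x, hx, rfl⟩ := mem_image.mp hv
  have hx0 : x ≠ 0 := (mem_erase.mp hx).1
  have : (univ.erase (0 : ZMod p)).filter (fun a => a ^ 3 = x ^ 3) =
      univ.filter (fun y : ZMod p => y ^ 3 = x ^ 3) := by
    ext y
    simp only [mem_filter, mem_erase, mem_univ, and_true, true_and, and_iff_right_iff_imp]
    rintro h rfl
    apply hx0
    simpa using h.symm
  rw [this, cube_fib p hp1 x hx0]
  simp

open Finset in
lemma cubT_even (p : ℕ) [hp : Fact p.Prime] (hp1 : p % 3 = 1) : (2 : ℤ) ∣ cubT p 1 := by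
  have h : ∀ v : ZMod p, (2 : ℤ) ∣ quadraticChar (ZMod p) v - (1 - if v = 0 then 1 else 0) := by
    intro v
    by_cases hv : v = 0
    · simp [hv]
    · rcases quadraticChar_dichotomy hv with h | h <;> simp [hv, h]
  have h2 := Finset.dvd_sum (s := univ) (fun (x : ZMod p) _ => h (1 + 1 * x ^ 3))
  rw [Finset.sum_sub_distrib, Finset.sum_sub_distrib] at h2
  have h3 := cube_fib p hp1 (-1) (by simp)
  have h4 : (∑ x : ZMod p, if 1 + 1 * x ^ 3 = 0 then (1 : ℤ) else 0) = 3 := by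
    rw [Finset.sum_boole]
    have : univ.filter (fun x : ZMod p => 1 + 1 * x ^ 3 = 0) =
        univ.filter (fun y : ZMod p => y ^ 3 = (-1) ^ 3) := by
      ext y
      simp only [mem_filter, mem_univ, true_and]
      constructor <;> intro h <;> linear_combination h
    rw [this, h3]; rfl
  rw [h4] at h2
  simp only [sum_const, card_univ, ZMod.card, nsmul_eq_mul, mul_one] at h2
  unfold cubT
  obtain ⟨h7, hodd⟩ := aux_p7 p hp1
  omega

/-- First moment. -/
lemma cubT_sum1 (p : ℕ) [hp : Fact p.Prime] (hp1 : p % 3 = 1) :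
    ∑ u : ZMod p, cubT p u = p := by
  unfold cubT
  rw [Finset.sum_comm, Finset.sum_eq_single 0]
  · simp [ZMod.card]
  · intro x _ hx
    rw [← quadraticChar_sum_zero (aux_char p hp1)]
    have : (fun u : ZMod p => 1 + u * x ^ 3) = (fun v => 1 + v) ∘ (fun u => u * x ^ 3) := rfl
    refine Fintype.sum_bijective (fun u : ZMod p => 1 + u * x ^ 3) ?_ _ _ (fun _ => rfl)
    rw [this]
    exact (AddGroup.addLeft_bijective 1).comp (mulRight_bijective₀ _ (pow_ne_zero 3 hx))
  · simp

lemma sum_shift (p : ℕ) [hp : Fact p.Prime] (hp1 : p % 3 = 1) (α : ZMod p) (hα : α ≠ 0) :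
    ∑ u : ZMod p, quadraticChar (ZMod p) (1 + u * α) = 0 := by
  rw [← quadraticChar_sum_zero (aux_char p hp1)]
  have : (fun u : ZMod p => 1 + u * α) = (fun v => 1 + v) ∘ (fun u => u * α) := rfl
  refine Fintype.sum_bijective (fun u : ZMod p => 1 + u * α) ?_ _ _ (fun _ => rfl)
  rw [this]
  exact (AddGroup.addLeft_bijective 1).comp (mulRight_bijective₀ _ hα)

lemma sum_pair (p : ℕ) [hp : Fact p.Prime] (hp1 : p % 3 = 1) (d : ZMod p) (hd : d ≠ 0) :
    ∑ v : ZMod p, quadraticChar (ZMod p) v * quadraticChar (ZMod p) (v + d) = -1 := by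
  have h1 := sum_shift p hp1 d hd
  have hinv : ∑ u : ZMod p, quadraticChar (ZMod p) (1 + u * d) =
      ∑ u : ZMod p, quadraticChar (ZMod p) (1 + u⁻¹ * d) :=
    (Fintype.sum_bijective (fun u : ZMod p => u⁻¹) inv_involutive.bijective _ _
      (fun _ => rfl)).symm
  rw [hinv, ← Finset.add_sum_erase _ _ (Finset.mem_univ (0 : ZMod p))] at h1
  rw [← Finset.add_sum_erase _ _ (Finset.mem_univ (0 : ZMod p))]
  simp only [inv_zero, zero_mul, add_zero, map_one] at h1
  rw [MulChar.map_zero, zero_mul, zero_add]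
  have : ∑ v ∈ Finset.univ.erase (0 : ZMod p), quadraticChar (ZMod p) v * quadraticChar (ZMod p) (v + d)
      = ∑ v ∈ Finset.univ.erase (0 : ZMod p), quadraticChar (ZMod p) (1 + v⁻¹ * d) := by
    refine Finset.sum_congr rfl fun v hv => ?_
    have hv0 : v ≠ 0 := (Finset.mem_erase.mp hv).1
    have : v + d = v * (1 + v⁻¹ * d) := by field_simp
    rw [this, map_mul, ← mul_assoc, ← pow_two, quadraticChar_sq_one hv0, one_mul]
  rw [this]; linarith

lemma sum_K (p : ℕ) [hp : Fact p.Prime] (hp1 : p % 3 = 1) (α β : ZMod p) :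
    ∑ u : ZMod p, quadraticChar (ZMod p) (1 + u * α) * quadraticChar (ZMod p) (1 + u * β) =
    quadraticChar (ZMod p) α * quadraticChar (ZMod p) β * ((if α = β then (p : ℤ) else 0) - 1)
      + (if α = 0 then (if β = 0 then (p : ℤ) else 0) else 0) := by
  by_cases hα : α = 0
  · subst hα
    by_cases hβ : β = 0
    · subst hβ; simp [ZMod.card]
    · simpa [hβ] using sum_shift p hp1 β hβ
  by_cases hβ : β = 0
  · subst hβ; simpa [hα] using sum_shift p hp1 α hα
  rw [if_neg hα, add_zero]
  have hbij : ∑ u : ZMod p, quadraticChar (ZMod p) (1 + u * α) * quadraticChar (ZMod p) (1 + u * β)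
      = ∑ v : ZMod p, quadraticChar (ZMod p) (v * α) *
        quadraticChar (ZMod p) ((v + (β⁻¹ - α⁻¹)) * β) := by
    refine Fintype.sum_bijective (fun u : ZMod p => α⁻¹ + u) (AddGroup.addLeft_bijective _) _ _ ?_
    intro u
    congr 2 <;> field_simp <;> ring
  rw [hbij]
  simp_rw [map_mul]
  have hre : ∀ v : ZMod p, quadraticChar (ZMod p) v * quadraticChar (ZMod p) α *
      (quadraticChar (ZMod p) (v + (β⁻¹ - α⁻¹)) * quadraticChar (ZMod p) β) =
      quadraticChar (ZMod p) α * quadraticChar (ZMod p) β * (quadraticChar (ZMod p) v *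
      quadraticChar (ZMod p) (v + (β⁻¹ - α⁻¹))) := fun v => by ring
  simp_rw [hre]
  rw [← Finset.mul_sum]
  congr 1
  by_cases h : α = β
  · subst h
    simp only [sub_self, add_zero, if_true]
    rw [← Finset.add_sum_erase _ _ (Finset.mem_univ (0 : ZMod p)), MulChar.map_zero, zero_mul, zero_add]
    have : ∀ v ∈ Finset.univ.erase (0 : ZMod p),
        quadraticChar (ZMod p) v * quadraticChar (ZMod p) v = 1 := by
      intro v hv
      rw [← pow_two, quadraticChar_sq_one (Finset.mem_erase.mp hv).1]
    rw [Finset.sum_congr rfl this]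
    simp [ZMod.card, Nat.cast_sub hp.out.one_lt.le]
  · rw [if_neg h, sum_pair p hp1]
    · simp
    · rw [sub_ne_zero]; intro h2; exact h (inv_injective h2).symm

open Finset in
/-- Second moment. -/
lemma cubT_sum2 (p : ℕ) [hp : Fact p.Prime] (hp1 : p % 3 = 1) :
    ∑ u : ZMod p, cubT p u ^ 2 = p + 3 * p * (p - 1) := by
  have h1 : ∀ u : ZMod p, cubT p u ^ 2 = ∑ x : ZMod p, ∑ y : ZMod p,
      quadraticChar (ZMod p) (1 + u * x ^ 3) * quadraticChar (ZMod p) (1 + u * y ^ 3) := by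
    intro u
    rw [pow_two, cubT, Finset.sum_mul_sum]
  simp_rw [h1]
  rw [Finset.sum_comm]
  have h2 : ∀ x : ZMod p, ∑ u : ZMod p, ∑ y : ZMod p,
      quadraticChar (ZMod p) (1 + u * x ^ 3) * quadraticChar (ZMod p) (1 + u * y ^ 3) =
      if x = 0 then (p : ℤ) else 3 * p := by
    intro x
    rw [Finset.sum_comm]
    simp_rw [sum_K p hp1]
    have h0 : ∑ y : ZMod p, quadraticChar (ZMod p) (y ^ 3) = 0 := by
      rw [← quadraticChar_sum_zero (aux_char p hp1)]
      refine Finset.sum_congr rfl fun y _ => ?_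
      by_cases hy : y = 0
      · simp [hy]
      · rw [pow_succ, map_mul, quadraticChar_sq_one' hy, one_mul]
    by_cases hx : x = 0
    · subst hx
      simp
    · have h3 : ∀ y : ZMod p, quadraticChar (ZMod p) (x ^ 3) * quadraticChar (ZMod p) (y ^ 3) *
          ((if x ^ 3 = y ^ 3 then (p : ℤ) else 0) - 1) +
          (if x ^ 3 = 0 then (if y ^ 3 = 0 then (p : ℤ) else 0) else 0) =
          p * (if y ^ 3 = x ^ 3 then 1 else 0)
          - quadraticChar (ZMod p) (x ^ 3) * quadraticChar (ZMod p) (y ^ 3) := by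
        intro y
        have hx3 : x ^ 3 ≠ 0 := pow_ne_zero 3 hx
        rw [if_neg hx3]
        by_cases h : y ^ 3 = x ^ 3
        · rw [h]
          have := quadraticChar_sq_one hx3
          simp only [if_true]
          linear_combination (p : ℤ) * this
        · rw [if_neg h, if_neg (fun hh => h hh.symm)]; ring
      simp_rw [h3]
      rw [Finset.sum_sub_distrib, ← Finset.mul_sum, ← Finset.mul_sum, h0, Finset.sum_boole,
        cube_fib p hp1 x hx, if_neg hx]
      push_cast; ring
  simp_rw [h2]
  rw [← Finset.add_sum_erase _ _ (Finset.mem_univ (0 : ZMod p)), if_pos rfl]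
  have h5 : ∀ v ∈ Finset.univ.erase (0 : ZMod p), (if v = 0 then (p : ℤ) else 3 * p) = 3 * p := by
    intro v hv
    rw [if_neg (Finset.mem_erase.mp hv).1]
  rw [Finset.sum_congr rfl h5]
  simp [ZMod.card, Nat.cast_sub hp.out.one_lt.le]
  ring

/-- Averaging over the three cubic classes. -/
lemma class_sum (p : ℕ) [hp : Fact p.Prime] (F : ZMod p → ℤ)
    (hF : ∀ u c : ZMod p, c ≠ 0 → F (u * c ^ 3) = F u) (g : ZMod p) (hg0 : g ≠ 0)
    (hg : ∀ u : ZMod p, u ≠ 0 → ∃ k : ℕ, u = g ^ k) :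
    3 * (∑ u : ZMod p, F u - F 0) = (p - 1) * (F 1 + F g + F (g ^ 2)) := by
  have hb : ∀ h : ZMod p, h ≠ 0 → ∑ u : ZMod p, F u - F 0 =
      ∑ u ∈ Finset.univ.erase (0 : ZMod p), F (u * h) := by
    intro h hh
    have : ∑ u : ZMod p, F u = ∑ u : ZMod p, F (u * h) :=
      (Fintype.sum_bijective (fun x => x * h) (mulRight_bijective₀ h hh) _ _ (fun x => rfl)).symm
    rw [this, ← Finset.add_sum_erase _ _ (Finset.mem_univ (0 : ZMod p)), zero_mul]; ring
  have e : 3 * (∑ u : ZMod p, F u - F 0) =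
      ∑ u ∈ Finset.univ.erase (0 : ZMod p), (F (u * 1) + F (u * g) + F (u * g ^ 2)) := by
    rw [Finset.sum_add_distrib, Finset.sum_add_distrib, ← hb 1 one_ne_zero, ← hb g hg0,
      ← hb (g ^ 2) (pow_ne_zero 2 hg0)]
    ring
  rw [e]
  have h5 : ∀ u ∈ Finset.univ.erase (0 : ZMod p), F (u * 1) + F (u * g) + F (u * g ^ 2) =
      F 1 + F g + F (g ^ 2) := by
    intro u hu
    obtain ⟨k, rfl⟩ := hg u (Finset.mem_erase.mp hu).1
    have hk : ∀ q r, F (g ^ (3 * q + r)) = F (g ^ r) := by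
      intro q r
      rw [pow_add, mul_comm 3 q, pow_mul, mul_comm, hF _ _ (pow_ne_zero q hg0)]
    obtain ⟨q, r, hr, rfl⟩ : ∃ q r, r < 3 ∧ k = 3 * q + r := ⟨k / 3, k % 3, by omega, by omega⟩
    rw [mul_one, ← pow_succ, ← pow_add, add_assoc (3 * q), add_assoc (3 * q), hk, hk, hk]
    have h3 := hk 1 0
    have h4 := hk 1 1
    norm_num at h3 h4
    interval_cases r <;> norm_num <;> rw [h3] <;> try rw [h4]
    all_goals ring
  rw [Finset.sum_congr rfl h5]
  simp [ZMod.card, Nat.cast_sub hp.out.one_lt.le]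

lemma rep_unique (p : ℕ) [hp : Fact p.Prime] (A B C D : ℤ) (h1 : (p : ℤ) = A ^ 2 + 3 * B ^ 2)
    (h2 : (p : ℤ) = C ^ 2 + 3 * D ^ 2) : A ^ 2 = C ^ 2 ∧ B ^ 2 = D ^ 2 := by
  have hpp : (0 : ℤ) < p := by exact_mod_cast hp.out.pos
  have hprime : Prime (p : ℤ) := Nat.prime_iff_prime_int.mp hp.out
  have key : ∀ X Y : ℤ, (p : ℤ) ^ 2 = X ^ 2 + 3 * Y ^ 2 → (p : ℤ) ∣ Y → Y = 0 := by
    rintro X Y h ⟨k, rfl⟩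
    by_contra hk
    have hk0 : k ≠ 0 := by rintro rfl; simp at hk
    have : 1 ≤ k ^ 2 := by have : 0 < k ^ 2 := by positivity
                           omega
    nlinarith [sq_nonneg X, mul_le_mul_of_nonneg_left this (sq_nonneg (p : ℤ)), pow_pos hpp 2]
  have e : (A * D - C * B) * (A * D + C * B) = p * (D ^ 2 - B ^ 2) := by
    linear_combination (-D ^ 2) * h1 + B ^ 2 * h2
  have hd : (p : ℤ) ∣ (A * D - C * B) * (A * D + C * B) := ⟨_, e⟩
  have hz : (A * D - C * B) * (A * D + C * B) = 0 := by
    rcases hprime.dvd_or_dvd hd with h | h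
    · rw [key (A * C + 3 * B * D) _ (by linear_combination (p : ℤ) * h1 + (A ^ 2 + 3 * B ^ 2) * h2) h,
        zero_mul]
    · rw [key (A * C - 3 * B * D) _ (by linear_combination (p : ℤ) * h1 + (A ^ 2 + 3 * B ^ 2) * h2) h,
        mul_zero]
  rw [hz] at e
  have : D ^ 2 - B ^ 2 = 0 := (mul_eq_zero.mp e.symm).resolve_left hpp.ne'
  constructor <;> linarith

lemma cubT_eval (p : ℕ) [hp : Fact p.Prime] (hp1 : p % 3 = 1)
    (A B : ℤ) (hpAB : (p : ℤ) = A ^ 2 + 3 * B ^ 2) (hA : A % 3 = 1) :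
    cubT p 1 = -2 * A ∧ ∀ u : ZMod p, u ≠ 0 → (u ^ ((p - 1) / 3) = 1 → cubT p u = -2 * A) ∧
      (u ^ ((p - 1) / 3) ≠ 1 → cubT p u = A + 3 * B ∨ cubT p u = A - 3 * B) := by
  obtain ⟨h7, hodd⟩ := aux_p7 p hp1
  obtain ⟨g, hg0, hg, hgo⟩ := aux_gen p
  have hp0 : ((p : ℤ) - 1) ≠ 0 := by omega
  have s1 := class_sum p (cubT p) (fun u c hc => cubT_cube p u c hc) g hg0 hg
  have s2 := class_sum p (fun u => cubT p u ^ 2)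
    (fun u c hc => by simp only [cubT_cube p u c hc]) g hg0 hg
  simp only [cubT_sum1 p hp1, cubT_sum2 p hp1, cubT_zero] at s1 s2
  have t1 : cubT p 1 + cubT p g + cubT p (g ^ 2) = 0 := by
    apply mul_left_cancel₀ hp0; linear_combination -s1
  have t2 : cubT p 1 ^ 2 + cubT p g ^ 2 + cubT p (g ^ 2) ^ 2 = 6 * p := by
    apply mul_left_cancel₀ hp0; linear_combination -s2
  obtain ⟨A', hA'⟩ := cubT_even p hp1
  have m1 := cubT_mod3 p hp1 1
  obtain ⟨D, hD⟩ : ∃ D, cubT p g = -A' + D := ⟨cubT p g + A', by ring⟩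
  have hD2 : cubT p (g ^ 2) = -A' - D := by linarith
  have q1 : 3 * A' ^ 2 + D ^ 2 = 3 * p := by
    rw [hA', hD, hD2] at t2
    linarith
  have d3 : (3 : ℤ) ∣ D := by
    apply Int.prime_three.dvd_of_dvd_pow (n := 2)
    exact ⟨p - A' ^ 2, by linarith⟩
  obtain ⟨E, rfl⟩ := d3
  have q2 : (p : ℤ) = (-A') ^ 2 + 3 * E ^ 2 := by linarith
  obtain ⟨u1, u2⟩ := rep_unique p _ _ _ _ hpAB q2
  have hAA : A' = -A := by
    rcases sq_eq_sq_iff_eq_or_eq_neg.mp u1 with h | h <;> omega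
  have hEE : E = B ∨ E = -B := sq_eq_sq_iff_eq_or_eq_neg.mp u2.symm
  have v1 : cubT p 1 = -2 * A := by rw [hA', hAA]; ring
  refine ⟨v1, ?_⟩
  intro u hu
  obtain ⟨k, rfl⟩ := hg u hu
  obtain ⟨q, r, hr, rfl⟩ : ∃ q r, r < 3 ∧ k = 3 * q + r := ⟨k / 3, k % 3, by omega, by omega⟩
  have hT : cubT p (g ^ (3 * q + r)) = cubT p (g ^ r) := by
    rw [pow_add, mul_comm 3 q, pow_mul, mul_comm, cubT_cube _ _ _ (pow_ne_zero q hg0)]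
  rw [hT]
  constructor
  · intro h
    rw [← pow_mul] at h
    obtain ⟨c, hc⟩ := hgo _ h
    have hn : p - 1 = 3 * ((p - 1) / 3) := by omega
    have hnp : 0 < (p - 1) / 3 := by omega
    generalize (p - 1) / 3 = n at *
    rw [hn] at hc
    have : 3 * q + r = 3 * c := by
      apply Nat.eq_of_mul_eq_mul_right hnp
      rw [hc]; ring
    obtain rfl : r = 0 := by omega
    rw [pow_zero, v1]
  · intro h
    interval_cases r
    · exfalso; apply h
      rw [add_zero, ← pow_mul]
      have : 3 * q * ((p - 1) / 3) = (p - 1) * q := by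
        have hn : p - 1 = 3 * ((p - 1) / 3) := by omega
        rw [mul_right_comm, ← hn]
      rw [this, pow_mul, ZMod.pow_card_sub_one_eq_one hg0, one_pow]
    · rw [pow_one, hD, hAA]; rcases hEE with rfl | rfl
      · left; ring
      · right; ring
    · rw [hD2, hAA]; rcases hEE with rfl | rfl
      · right; ring
      · left; ring

section count
open Finset

lemma root_pair (p : ℕ) [hp : Fact p.Prime] (hp1 : p % 3 = 1) (a x y z : ZMod p)
    (hx : x ≠ 0) (e2 : x * y + y * z + z * x = 0) (e3 : 2 * (x * y * z) = -a) :
    univ.filter (fun Y : ZMod p => 2 * x ^ 2 * Y ^ 2 = a * (x + Y)) = {y, z} := by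
  have h2 := aux_two p hp1
  ext Y
  simp only [mem_filter, mem_univ, true_and, mem_insert, mem_singleton]
  have e : 2 * x ^ 2 * Y ^ 2 - a * (x + Y) = 2 * x ^ 2 * ((Y - y) * (Y - z)) := by
    linear_combination -(x + Y) * e3 + 2 * x * Y * e2
  constructor
  · intro h
    rw [h, sub_self] at e
    have := (mul_eq_zero.mp e.symm).resolve_left (mul_ne_zero h2 (pow_ne_zero 2 hx))
    rcases mul_eq_zero.mp this with h | h
    · left; exact sub_eq_zero.mp h
    · right; exact sub_eq_zero.mp h
  · intro h
    apply sub_eq_zero.mp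
    rw [e]
    rcases h with rfl | rfl <;> simp

lemma fib_sum (p : ℕ) [hp : Fact p.Prime] (hp1 : p % 3 = 1) (a b : ZMod p) (ha : a ≠ 0)
    (hb : ∃ x : ZMod p, x ≠ 0 ∧ 2 * x ^ 3 + a = 2 * b * x ^ 2) :
    ∑ x ∈ (univ.erase (0 : ZMod p)).filter (fun x => 2 * x ^ 3 + a = 2 * b * x ^ 2),
      ((3 : ℤ) - #(univ.filter (fun Y : ZMod p => 2 * x ^ 2 * Y ^ 2 = a * (x + Y)))) = 3 := by
  have h2 := aux_two p hp1
  have h3 := aux_three p hp1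
  obtain ⟨x, hx, hxb⟩ := hb
  by_cases hy : ∃ y, 2 * x ^ 2 * y ^ 2 = a * (x + y)
  · obtain ⟨y, hy⟩ := hy
    have hx2 : 2 * x ^ 2 ≠ 0 := mul_ne_zero h2 (pow_ne_zero 2 hx)
    obtain ⟨z, hz⟩ : ∃ z, 2 * x ^ 2 * (y + z) = a :=
      ⟨a / (2 * x ^ 2) - y, by field_simp; ring⟩
    have e3 : 2 * (x * y * z) = -a := by
      apply mul_left_cancel₀ hx
      linear_combination y * hz - hy
    have e2 : x * y + y * z + z * x = 0 := by
      apply mul_left_cancel₀ (mul_ne_zero h2 hx)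
      linear_combination hz + e3
    have hy0 : y ≠ 0 := by rintro rfl; apply ha; linear_combination e3
    have hz0 : z ≠ 0 := by rintro rfl; apply ha; linear_combination e3
    have eb : b = x + y + z := by
      apply mul_left_cancel₀ hx2
      linear_combination -hxb - hz
    have hfib : (univ.erase (0 : ZMod p)).filter (fun x => 2 * x ^ 3 + a = 2 * b * x ^ 2) =
        {x, y, z} := by
      ext X
      simp only [mem_filter, mem_erase, mem_univ, and_true, mem_insert, mem_singleton]
      have e : 2 * X ^ 3 + a - 2 * b * X ^ 2 = 2 * ((X - x) * ((X - y) * (X - z))) := by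
        rw [eb]; linear_combination e3 - 2 * X * e2
      constructor
      · rintro ⟨-, h⟩
        rw [h, sub_self] at e
        have := (mul_eq_zero.mp e.symm).resolve_left h2
        rcases mul_eq_zero.mp this with h | h
        · left; exact sub_eq_zero.mp h
        rcases mul_eq_zero.mp h with h | h
        · right; left; exact sub_eq_zero.mp h
        · right; right; exact sub_eq_zero.mp h
      · intro h
        refine ⟨by rcases h with rfl | rfl | rfl <;> assumption, ?_⟩
        apply sub_eq_zero.mp
        rw [e]
        rcases h with rfl | rfl | rfl <;> simp
    have mx := root_pair p hp1 a x y z hx e2 e3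
    have my := root_pair p hp1 a y x z hy0 (by linear_combination e2) (by linear_combination e3)
    have mz := root_pair p hp1 a z x y hz0 (by linear_combination e2) (by linear_combination e3)
    have hne : ¬ (x = y ∧ y = z) := by
      rintro ⟨rfl, rfl⟩
      have : 3 * x ^ 2 = 0 := by linear_combination e2
      exact mul_ne_zero h3 (pow_ne_zero 2 hx) this
    rw [hfib]
    by_cases hxy : x = y
    · subst hxy
      have hxz : x ≠ z := fun h => hne ⟨rfl, h⟩
      rw [insert_eq_of_mem (by simp), sum_pair hxz, mx, mz, card_pair hxz]
      simp
    by_cases hxz : x = z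
    · subst hxz
      have hyx : y ≠ x := fun h => hxy h.symm
      rw [insert_eq_of_mem (by simp), sum_pair hyx, mx, my, card_pair hyx]
      simp
    by_cases hyz : y = z
    · subst hyz
      rw [insert_eq_of_mem (by simp : y ∈ ({y} : Finset (ZMod p))), sum_pair hxy, mx, my,
        card_pair hxy]
      simp
    · rw [sum_insert (by simp [hxy, hxz]), sum_pair hyz, mx, my, mz, card_pair hxy, card_pair hxz,
        card_pair hyz]
      norm_num
  · have hm : univ.filter (fun Y : ZMod p => 2 * x ^ 2 * Y ^ 2 = a * (x + Y)) = ∅ := by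
      rw [filter_eq_empty_iff]
      intro y _ h
      exact hy ⟨y, h⟩
    have hfib : (univ.erase (0 : ZMod p)).filter (fun x => 2 * x ^ 3 + a = 2 * b * x ^ 2) = {x} := by
      ext X
      simp only [mem_filter, mem_erase, mem_univ, and_true, mem_singleton]
      constructor
      · rintro ⟨hX, h⟩
        by_contra hne
        apply hy
        refine ⟨X, ?_⟩
        apply mul_left_cancel₀ (sub_ne_zero.mpr hne)
        linear_combination x ^ 2 * h - X ^ 2 * hxb
      · rintro rfl; exact ⟨hx, hxb⟩
    rw [hfib, sum_singleton, hm]; simp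

lemma m_eval (p : ℕ) [hp : Fact p.Prime] (hp1 : p % 3 = 1) (a x : ZMod p) (ha : a ≠ 0)
    (hx : x ≠ 0) :
    (#(univ.filter (fun Y : ZMod p => 2 * x ^ 2 * Y ^ 2 = a * (x + Y))) : ℤ) =
      quadraticChar (ZMod p) (1 + a⁻¹ * 2 ^ 3 * x ^ 3) + 1 := by
  have h2 := aux_two p hp1
  have h4 : (4 : ZMod p) * x ^ 2 ≠ 0 := by
    have : (4 : ZMod p) = 2 * 2 := by norm_num
    rw [this]; exact mul_ne_zero (mul_ne_zero h2 h2) (pow_ne_zero 2 hx)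
  have h8 : (2 : ZMod p) * (4 * x ^ 2) ≠ 0 := mul_ne_zero h2 h4
  have e : quadraticChar (ZMod p) (1 + a⁻¹ * 2 ^ 3 * x ^ 3) =
      quadraticChar (ZMod p) (a ^ 2 + 8 * a * x ^ 3) := by
    have : a ^ 2 + 8 * a * x ^ 3 = a ^ 2 * (1 + a⁻¹ * 2 ^ 3 * x ^ 3) := by field_simp; ring
    rw [this, map_mul, quadraticChar_sq_one' ha, one_mul]
  rw [e, ← quadraticChar_card_sqrts (aux_char p hp1)]
  congr 1
  refine Finset.card_bij (fun y _ => 4 * x ^ 2 * y - a) ?_ ?_ ?_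
  · intro y hy
    simp only [mem_filter, mem_univ, true_and] at hy
    simp only [Set.mem_toFinset, Set.mem_ofPred_eq]
    linear_combination 8 * x ^ 2 * hy
  · intro y _ z _ h
    apply mul_left_cancel₀ h4
    linear_combination h
  · intro s hs
    simp only [Set.mem_toFinset, Set.mem_ofPred_eq] at hs
    refine ⟨(s + a) / (4 * x ^ 2), ?_, ?_⟩
    · simp only [mem_filter, mem_univ, true_and]
      obtain ⟨y, hy⟩ : ∃ y, y = (s + a) / (4 * x ^ 2) := ⟨_, rfl⟩
      rw [← hy]
      have hys : s = 4 * x ^ 2 * y - a := by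
        rw [hy, mul_div_cancel₀ _ h4]; ring
      rw [hys] at hs
      apply mul_left_cancel₀ h8
      linear_combination hs
    · rw [mul_div_cancel₀ _ h4]; ring

lemma main_count (p : ℕ) [hp : Fact p.Prime] (hp1 : p % 3 = 1) (a : ZMod p) (ha : a ≠ 0) :
    3 * (#(univ.filter (fun b : ZMod p => ∃ x : ZMod p, x ≠ 0 ∧ 2 * x ^ 3 + a = 2 * b * x ^ 2)) : ℤ)
      = 2 * p - 1 - cubT p a⁻¹ := by
  have h2 := aux_two p hp1
  set S := univ.filter (fun b : ZMod p => ∃ x : ZMod p, x ≠ 0 ∧ 2 * x ^ 3 + a = 2 * b * x ^ 2)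
    with hS
  let f : ZMod p → ZMod p := fun x => (2 * x ^ 3 + a) / (2 * x ^ 2)
  have hf : ∀ x b : ZMod p, x ≠ 0 → (f x = b ↔ 2 * x ^ 3 + a = 2 * b * x ^ 2) := by
    intro x b hx
    have : 2 * x ^ 2 ≠ 0 := mul_ne_zero h2 (pow_ne_zero 2 hx)
    simp only [f]
    rw [div_eq_iff this]
    constructor <;> intro h <;> linear_combination h
  have hmaps : ∀ x ∈ univ.erase (0 : ZMod p), f x ∈ S := by
    intro x hx
    have hx0 := (mem_erase.mp hx).1
    rw [hS, mem_filter]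
    exact ⟨mem_univ _, x, hx0, (hf x _ hx0).mp rfl⟩
  have t1 := sum_fiberwise_of_maps_to hmaps (fun x : ZMod p =>
    ((3 : ℤ) - #(univ.filter (fun Y : ZMod p => 2 * x ^ 2 * Y ^ 2 = a * (x + Y)))))
  have t2 : ∀ b ∈ S, ∑ x ∈ (univ.erase (0 : ZMod p)).filter (fun x => f x = b),
      ((3 : ℤ) - #(univ.filter (fun Y : ZMod p => 2 * x ^ 2 * Y ^ 2 = a * (x + Y)))) = 3 := by
    intro b hb
    rw [hS, mem_filter] at hb
    refine Eq.trans (Finset.sum_congr ?_ fun _ _ => rfl) (fib_sum p hp1 a b ha hb.2)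
    apply filter_congr
    intro x hx
    exact hf x b (mem_erase.mp hx).1
  rw [sum_congr rfl t2] at t1
  have t3 : ∑ x ∈ univ.erase (0 : ZMod p),
      ((3 : ℤ) - #(univ.filter (fun Y : ZMod p => 2 * x ^ 2 * Y ^ 2 = a * (x + Y)))) =
      ∑ x ∈ univ.erase (0 : ZMod p), (2 - quadraticChar (ZMod p) (1 + a⁻¹ * 2 ^ 3 * x ^ 3)) := by
    refine sum_congr rfl fun x hx => ?_
    rw [m_eval p hp1 a x ha (mem_erase.mp hx).1]; ring
  rw [t3, sum_sub_distrib] at t1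
  have t4 : cubT p a⁻¹ = 1 + ∑ x ∈ univ.erase (0 : ZMod p),
      quadraticChar (ZMod p) (1 + a⁻¹ * 2 ^ 3 * x ^ 3) := by
    rw [← cubT_cube p a⁻¹ 2 h2, cubT, ← Finset.add_sum_erase _ _ (mem_univ (0 : ZMod p))]
    simp
  rw [t4]
  simp only [sum_const, smul_eq_mul, card_erase_of_mem (mem_univ _), card_univ, ZMod.card,
    nsmul_eq_mul, Nat.cast_sub hp.out.one_lt.le] at t1
  push_cast at t1
  linarith

lemma card_conv (p : ℕ) [hp : Fact p.Prime] (a : ℤ) :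
    ((Finset.range p).filter (fun b : ℕ =>
      ∃ x ∈ Finset.Icc 1 (p - 1),
        2 * (x : ℤ) ^ 3 + (a) ≡ 2 * (b : ℤ) * (x : ℤ) ^ 2 [ZMOD (p : ℤ)])).card =
    #(univ.filter (fun b : ZMod p =>
      ∃ x : ZMod p, x ≠ 0 ∧ 2 * x ^ 3 + (a : ZMod p) = 2 * b * x ^ 2)) := by
  have hpos := hp.out.pos
  refine Finset.card_bij (fun b _ => (b : ZMod p)) ?_ ?_ ?_
  · intro b hb
    simp only [mem_filter, mem_univ, true_and, mem_range, mem_Icc] at hb ⊢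
    obtain ⟨hb, x, hx, h⟩ := hb
    refine ⟨x, ?_, ?_⟩
    · rw [Ne, ZMod.natCast_eq_zero_iff]
      intro hd
      have := Nat.le_of_dvd (by omega) hd
      omega
    · have := (ZMod.intCast_eq_intCast_iff _ _ _).mpr h
      push_cast at this
      exact this
  · intro b hb c hc h
    simp only [mem_filter, mem_range] at hb hc
    rw [ZMod.natCast_eq_natCast_iff'] at h
    rwa [Nat.mod_eq_of_lt hb.1, Nat.mod_eq_of_lt hc.1] at h
  · intro b hb
    simp only [mem_filter, mem_univ, true_and] at hb
    obtain ⟨x, hx, h⟩ := hb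
    refine ⟨b.val, ?_, ZMod.natCast_zmod_val b⟩
    simp only [mem_filter, mem_range, mem_Icc]
    refine ⟨ZMod.val_lt b, x.val, ⟨?_, ?_⟩, ?_⟩
    · exact Nat.one_le_iff_ne_zero.mpr ((ZMod.val_ne_zero x).mpr hx)
    · have := ZMod.val_lt x; omega
    · rw [← ZMod.intCast_eq_intCast_iff]
      push_cast
      rw [ZMod.natCast_zmod_val, ZMod.natCast_zmod_val]
      exact h

end count



theorem stmt_5 (p : ℕ) [hp : Fact p.Prime] (hp1 : p % 3 = 1)
    (A B : ℤ) (hpAB : (p : ℤ) = A ^ 2 + 3 * B ^ 2) (hA : A % 3 = 1)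
    (a : ℤ) (ha : ¬ (p : ℤ) ∣ a) :
    (((a : ZMod p)) ^ ((p - 1) / 3) = 1 →
      3 * (((Finset.range p).filter (fun b : ℕ =>
      ∃ x ∈ Finset.Icc 1 (p - 1),
        2 * (x : ℤ) ^ 3 + (a) ≡ 2 * (b : ℤ) * (x : ℤ) ^ 2 [ZMOD (p : ℤ)])).card : ℤ) = 2 * (p : ℤ) - 1 + 2 * A) ∧
    (((a : ZMod p)) ^ ((p - 1) / 3) = (-1 + (A : ZMod p) * (B : ZMod p)⁻¹) / 2 →
      3 * (((Finset.range p).filter (fun b : ℕ =>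
      ∃ x ∈ Finset.Icc 1 (p - 1),
        2 * (x : ℤ) ^ 3 + (a) ≡ 2 * (b : ℤ) * (x : ℤ) ^ 2 [ZMOD (p : ℤ)])).card : ℤ) = 2 * (p : ℤ) - 1 - A + 3 * B) ∧
    (((a : ZMod p)) ^ ((p - 1) / 3) = (-1 - (A : ZMod p) * (B : ZMod p)⁻¹) / 2 →
      3 * (((Finset.range p).filter (fun b : ℕ =>
      ∃ x ∈ Finset.Icc 1 (p - 1),
        2 * (x : ℤ) ^ 3 + (a) ≡ 2 * (b : ℤ) * (x : ℤ) ^ 2 [ZMOD (p : ℤ)])).card : ℤ) = 2 * (p : ℤ) - 1 - A - 3 * B) := by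
  obtain ⟨h7, hodd⟩ := aux_p7 p hp1
  have ha0 : (a : ZMod p) ≠ 0 := by
    rwa [Ne, ZMod.intCast_zmod_eq_zero_iff_dvd]
  have hprime : Prime (p : ℤ) := Nat.prime_iff_prime_int.mp hp.out
  have h2 := aux_two p hp1
  have h3 := aux_three p hp1
  have hBnd : ¬ (p : ℤ) ∣ B := by
    rintro ⟨k, rfl⟩
    have hA' : (p : ℤ) ∣ A := by
      apply hprime.dvd_of_dvd_pow (n := 2)
      exact ⟨1 - 3 * p * k ^ 2, by linear_combination -hpAB⟩
    obtain ⟨l, rfl⟩ := hA'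
    have : (p : ℤ) * (p * (l ^ 2 + 3 * k ^ 2)) = p * 1 := by linear_combination -hpAB
    have := mul_left_cancel₀ hprime.ne_zero this
    exact hprime.not_dvd_one ⟨_, this.symm⟩
  have hB0 : (B : ZMod p) ≠ 0 := by
    rwa [Ne, ZMod.intCast_zmod_eq_zero_iff_dvd]
  have hAB0 : (A : ZMod p) ^ 2 + 3 * (B : ZMod p) ^ 2 = 0 := by
    have := congrArg (Int.cast : ℤ → ZMod p) hpAB
    push_cast at this
    rw [← this]; simp
  obtain ⟨T1, hT⟩ := cubT_eval p hp1 A B hpAB hA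
  obtain ⟨c1, c2⟩ := hT (a : ZMod p)⁻¹ (inv_ne_zero ha0)
  have hm := cubT_modp p hp1 (a : ZMod p)⁻¹
  rw [T1] at hm
  rw [card_conv, main_count p hp1 _ ha0]
  rw [inv_pow] at c1 c2 hm
  generalize (a : ZMod p) ^ ((p - 1) / 3) = w at *
  generalize cubT p (a : ZMod p)⁻¹ = T at *
  push_cast at hm
  obtain ⟨s, hs⟩ : ∃ s : ZMod p, s = (A : ZMod p) * (B : ZMod p)⁻¹ := ⟨_, rfl⟩
  rw [← hs]
  have hsB : s * B = A := by rw [hs, inv_mul_cancel_right₀ hB0]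
  have hs2 : s ^ 2 = -3 := by
    apply mul_right_cancel₀ (pow_ne_zero 2 hB0)
    rw [← mul_pow, hsB]; linear_combination hAB0
  have h6B : (6 : ZMod p) * B ≠ 0 := by
    have : (6 : ZMod p) = 2 * 3 := by norm_num
    rw [this]; exact mul_ne_zero (mul_ne_zero h2 h3) hB0
  have gen : ∀ t : ZMod p, t ^ 2 = -3 → w = (-1 + t) / 2 →
      w⁻¹ ≠ 1 ∧ (T : ZMod p) = A * (1 + t) := by
    intro t ht hw
    have hww : w * ((-1 - t) / 2) = 1 := by
      rw [hw]; field_simp; linear_combination -ht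
    have hwi : w⁻¹ = (-1 - t) / 2 := inv_eq_of_mul_eq_one_right hww
    constructor
    · rw [hwi]
      intro h
      rw [div_eq_iff h2] at h
      have ht3 : t = -3 := by linear_combination -h
      rw [ht3] at ht
      have : (2 : ZMod p) * 2 * 3 = 0 := by linear_combination ht
      exact mul_ne_zero (mul_ne_zero h2 h2) h3 this
    · rw [hm, hwi]; field_simp; ring
  refine ⟨?_, ?_, ?_⟩
  · intro h
    rw [c1 (by rw [h, inv_one])]; ring
  · intro h
    obtain ⟨g1, g2⟩ := gen s hs2 h
    rcases c2 g1 with h | h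
    · exfalso
      rw [h] at g2
      push_cast at g2
      apply h6B
      linear_combination g2 - s * hsB + B * hs2
    · rw [h]; ring
  · intro h
    obtain ⟨g1, g2⟩ := gen (-s) (by linear_combination hs2) (by rw [h]; ring)
    rcases c2 g1 with h | h
    · rw [h]; ring
    · exfalso
      rw [h] at g2
      push_cast at g2
      apply h6B
      linear_combination -g2 - s * hsB + B * hs2
end

section
/- Let p be a prime with p ≡ 1 (mod 3), and write 4p = L² + 27M² with integers L, M and L ≡ 1 (mod 3) (such L is unique). Then L = 2p − 1 − 3·V_p(x² + 1/x) and L = 2p − 1 − 3·V_p(x + 1/x²). -/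
theorem aux_eq_inv {K : Type*} [Field K] {a b : K} (hb : b ≠ 0) : a = b⁻¹ ↔ a * b = 1 := by
  rw [eq_comm, inv_eq_iff_eq_inv, eq_comm, inv_eq_iff_eq_inv, ← one_div, eq_div_iff hb]

open Finset in
theorem aux_unique (p : ℕ) (hp : p.Prime) (L M L' M' : ℤ)
    (h : 4 * (p : ℤ) = L ^ 2 + 27 * M ^ 2) (h' : 4 * (p : ℤ) = L' ^ 2 + 27 * M' ^ 2)
    (hL : L % 3 = 1) (hL' : L' % 3 = 1) : L = L' := by
  have hp0 : (0 : ℤ) < p := by exact_mod_cast hp.pos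
  have key : ∀ N : ℤ, 4 * (p : ℤ) = L' ^ 2 + 27 * N ^ 2 → (p : ℤ) ∣ L * N - L' * M → L = L' := by
    intro N hN hd
    obtain ⟨k, hk⟩ := hd
    have e1 : 16 * (p : ℤ) ^ 2 = (L * L' + 27 * M * N) ^ 2 + 27 * (L * N - L' * M) ^ 2 := by
      have : 16 * (p : ℤ) ^ 2 = (L ^ 2 + 27 * M ^ 2) * (L' ^ 2 + 27 * N ^ 2) := by
        rw [← h, ← hN]; ring
      rw [this]; ring
    have hk0 : k = 0 := by
      by_contra hk0
      have h1 : 1 ≤ k ^ 2 := by have := sq_pos_of_ne_zero hk0; omega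
      rw [hk] at e1
      have hp2 : 0 < (p : ℤ) ^ 2 := by positivity
      nlinarith [sq_nonneg (L * L' + 27 * M * N), mul_le_mul_of_nonneg_left h1 hp2.le]
    have e2 : L * N = L' * M := by rw [hk0] at hk; linarith
    have e3 : (p : ℤ) * (N ^ 2 - M ^ 2) = 0 := by
      have : L ^ 2 * N ^ 2 = L' ^ 2 * M ^ 2 := by rw [← mul_pow, e2, mul_pow]
      have a1 : L ^ 2 = 4 * p - 27 * M ^ 2 := by linarith
      have a2 : L' ^ 2 = 4 * p - 27 * N ^ 2 := by linarith
      rw [a1, a2] at this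
      linarith
    have e4 : N ^ 2 - M ^ 2 = 0 := by
      rcases mul_eq_zero.mp e3 with h0 | h0
      · omega
      · exact h0
    have e5 : L ^ 2 = L' ^ 2 := by linarith
    rcases sq_eq_sq_iff_eq_or_eq_neg.mp e5 with h0 | h0 <;> omega
  have hdvd : (p : ℤ) ∣ (L * M' - L' * M) * (L * M' + L' * M) := by
    refine ⟨4 * (M' ^ 2 - M ^ 2), ?_⟩
    have a1 : L ^ 2 = 4 * p - 27 * M ^ 2 := by linarith
    have a2 : L' ^ 2 = 4 * p - 27 * M' ^ 2 := by linarith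
    have : (L * M' - L' * M) * (L * M' + L' * M) = L ^ 2 * M' ^ 2 - L' ^ 2 * M ^ 2 := by ring
    rw [this, a1, a2]; ring
  rcases (Nat.prime_iff_prime_int.mp hp).dvd_or_dvd hdvd with h0 | h0
  · exact key M' h' h0
  · refine key (-M') (by simpa using h') ?_
    have := (dvd_neg (α := ℤ)).mpr h0
    have e : L * -M' - L' * M = -(L * M' + L' * M) := by ring
    rw [e]; exact this

section
variable {p : ℕ} [Fact p.Prime]

theorem aux_cubes (hp1 : p % 3 = 1) (χ : MulChar (ZMod p) ℂ) (hχ : orderOf χ = 3) (a : ZMod p) :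
    (((Finset.univ.filter (fun u : ZMod p => u ^ 3 * a = 1)).card : ℕ) : ℂ)
      = (1 : MulChar (ZMod p) ℂ) a + χ a + χ⁻¹ a := by
  rcases eq_or_ne a 0 with rfl | ha
  · simp [MulChar.map_zero]
  have h3 : χ ^ 3 = 1 := hχ ▸ pow_orderOf_eq_one χ
  have hχ1 : χ ≠ 1 := by rintro rfl; simp at hχ
  have hcube : ∀ y : ZMod p, y ≠ 0 → χ y ^ 3 = 1 := by
    intro y hy
    have : (χ ^ 3) y = 1 := by rw [h3, MulChar.one_apply hy.isUnit]
    rwa [MulChar.pow_apply' _ (by norm_num)] at this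
  rw [MulChar.one_apply ha.isUnit, MulChar.inv_apply_eq_inv', ]
  obtain ⟨g, hg⟩ := IsCyclic.exists_generator (α := (ZMod p)ˣ)
  have hχg : χ g ≠ 1 := by
    intro hh
    apply hχ1
    rw [MulChar.eq_iff hg, hh, MulChar.one_apply g.isUnit]
  have hord : orderOf g = p - 1 := by
    rw [orderOf_eq_card_of_forall_mem_zpowers hg, Nat.card_eq_fintype_card, ZMod.card_units]
  have hpp : p.Prime := Fact.out
  obtain ⟨m, hm⟩ : ∃ m, p - 1 = 3 * m := ⟨(p - 1) / 3, by omega⟩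
  have hm0 : 0 < m := by have := hpp.two_le; omega
  by_cases hc : ∃ u : ZMod p, u ^ 3 * a = 1
  · obtain ⟨u, hu⟩ := hc
    have hu0 : u ≠ 0 := by rintro rfl; simp at hu
    have hχa : χ a = 1 := by
      have : χ (u ^ 3 * a) = 1 := by rw [hu, map_one]
      rwa [map_mul, map_pow, hcube u hu0, one_mul] at this
    rw [hχa]
    have hω : IsPrimitiveRoot ((g ^ m : (ZMod p)ˣ) : ZMod p) 3 := by
      rw [IsPrimitiveRoot.coe_units_iff]
      have := IsPrimitiveRoot.orderOf g
      rw [hord] at this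
      exact this.pow (by omega) (by rw [hm]; ring)
    have hcard := hω.card_nthRoots a⁻¹
    rw [if_pos ⟨u, by field_simp; exact hu⟩] at hcard
    have hnd := hω.nthRoots_nodup (a := a⁻¹) (inv_ne_zero ha)
    have : (Finset.univ.filter (fun u : ZMod p => u ^ 3 * a = 1)) =
        (Polynomial.nthRoots 3 a⁻¹).toFinset := by
      ext x
      simp only [Finset.mem_filter, Finset.mem_univ, true_and, Multiset.mem_toFinset]
      rw [Polynomial.mem_nthRoots (by norm_num), aux_eq_inv ha]
    rw [this, Multiset.toFinset_card_of_nodup hnd, hcard]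
    norm_num
  · have : (Finset.univ.filter (fun u : ZMod p => u ^ 3 * a = 1)) = ∅ := by
      rw [Finset.filter_eq_empty_iff]
      intro x _ hx
      exact hc ⟨x, hx⟩
    rw [this]
    have hz : χ a ≠ 1 := by
      intro hz
      apply hc
      obtain ⟨k, hk⟩ := Subgroup.mem_zpowers_iff.mp (hg (Units.mk0 a ha))
      have hgu : χ.toUnitHom g ^ 3 = 1 := by
        rw [← map_pow]
        ext
        simpa using hcube g g.ne_zero
      have hgn : χ.toUnitHom g ≠ 1 := by
        intro h
        apply hχg
        simpa using congrArg Units.val h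
      have ho : orderOf (χ.toUnitHom g) = 3 := orderOf_eq_prime hgu hgn
      have hk1 : χ.toUnitHom g ^ k = 1 := by
        rw [← map_zpow, hk]
        ext
        simpa using hz
      have := orderOf_dvd_iff_zpow_eq_one.mpr hk1
      rw [ho] at this
      obtain ⟨j, hj⟩ := this
      refine ⟨((g ^ (-j) : (ZMod p)ˣ) : ZMod p), ?_⟩
      have : (g ^ (-j)) ^ 3 * Units.mk0 a ha = 1 := by
        rw [← hk, hj, ← zpow_natCast, ← zpow_mul, ← zpow_add]
        have : -j * ((3 : ℕ) : ℤ) + ((3 : ℕ) : ℤ) * j = 0 := by ring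
        rw [this, zpow_zero]
      simpa using congrArg Units.val this
    have hz0 : χ a ≠ 0 := (ha.isUnit.map χ).ne_zero
    have h1 := hcube a ha
    have h2 : (χ a - 1) * (1 + χ a + χ a ^ 2) = 0 := by linear_combination h1
    have h4 : 1 + χ a + χ a ^ 2 = 0 := (mul_eq_zero.mp h2).resolve_left (sub_ne_zero.mpr hz)
    have h5 : (χ a)⁻¹ = χ a ^ 2 := by
      rw [inv_eq_iff_eq_inv, aux_eq_inv (pow_ne_zero _ hz0)]
      linear_combination h1
    rw [h5, h4]; simp

theorem aux_adjoin (μ : ℂ) (hμ : μ ^ 2 = -1 - μ) (z : ℂ) (hz : z ∈ Algebra.adjoin ℤ {μ}) :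
    ∃ u v : ℤ, z = u + v * μ := by
  induction hz using Algebra.adjoin_induction with
  | mem x hx =>
    rw [Set.mem_singleton_iff] at hx
    exact ⟨0, 1, by simp [hx]⟩
  | algebraMap r => exact ⟨r, 0, by simp⟩
  | add x y _ _ h1 h2 =>
    obtain ⟨a, b, rfl⟩ := h1
    obtain ⟨c, d, rfl⟩ := h2
    exact ⟨a + c, b + d, by push_cast; ring⟩
  | mul x y _ _ h1 h2 =>
    obtain ⟨a, b, rfl⟩ := h1
    obtain ⟨c, d, rfl⟩ := h2
    exact ⟨a * c - b * d, a * d + b * c - b * d, by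
      push_cast; linear_combination (b * d : ℂ) * hμ⟩

theorem aux_jacobi (hp1 : p % 3 = 1) (χ : MulChar (ZMod p) ℂ) (hχ : orderOf χ = 3) :
    ∃ L M : ℤ, 4 * (p : ℤ) = L ^ 2 + 27 * M ^ 2 ∧ L % 3 = 1 ∧
      jacobiSum χ χ + jacobiSum χ⁻¹ χ⁻¹ = (L : ℂ) := by
  have hpp : p.Prime := Fact.out
  obtain ⟨μ, hμ⟩ : ∃ μ : ℂ, IsPrimitiveRoot μ 3 :=
    ⟨_, Complex.isPrimitiveRoot_exp 3 (by norm_num)⟩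
  have h3 : χ ^ 3 = 1 := hχ ▸ pow_orderOf_eq_one χ
  have hχ1 : χ ≠ 1 := by rintro rfl; simp at hχ
  have hχ2 : χ * χ ≠ 1 := by
    intro h
    have : orderOf χ ∣ 2 := orderOf_dvd_of_pow_eq_one (by rw [pow_two, h])
    rw [hχ] at this
    omega
  have hμ1 : μ ≠ 1 := hμ.ne_one (by norm_num)
  have hμ3 := hμ.pow_eq_one
  have hμ2 : μ ^ 2 = -1 - μ := by
    have h2 : (μ - 1) * (1 + μ + μ ^ 2) = 0 := by linear_combination hμ3
    have := (mul_eq_zero.mp h2).resolve_left (sub_ne_zero.mpr hμ1)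
    linear_combination this
  have hconjμ : star μ = μ ^ 2 := by
    have h1 := hμ.norm'_eq_one (by norm_num)
    have h2 := Complex.inv_eq_conj h1
    have h0 : μ ≠ 0 := hμ.ne_zero (by norm_num)
    rw [Complex.star_def, ← h2, inv_eq_iff_eq_inv, aux_eq_inv (pow_ne_zero _ h0)]
    linear_combination hμ3
  obtain ⟨z, hz, hJ⟩ := exists_jacobiSum_eq_neg_one_add (n := 3) (by norm_num) h3 h3
    (by rw [ZMod.card]; omega) hμ
  obtain ⟨u, v, rfl⟩ := aux_adjoin μ hμ2 z hz
  have hJ' : jacobiSum χ⁻¹ χ⁻¹ = star (jacobiSum χ χ) := by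
    simp only [jacobiSum, star_sum, star_mul', MulChar.star_apply']
  have e1 : jacobiSum χ χ = (-1 + 3 * v) + 3 * (v - u) * μ := by
    rw [hJ]
    linear_combination (u + v * μ - 3 * v : ℂ) * hμ2
  have e2 : jacobiSum χ⁻¹ χ⁻¹ = (-1 + 3 * v) + 3 * (v - u) * μ ^ 2 := by
    rw [hJ', e1]
    simp only [star_add, star_mul', star_neg, star_one, star_sub, hconjμ]
    simp
  have hprod := jacobiSum_mul_jacobiSum_inv (F := ZMod p) (F' := ℂ) (χ := χ) (φ := χ)
    (by rw [ZMod.ringChar_zmod_n, ringChar.eq_zero]; exact hpp.ne_zero.symm) hχ1 hχ1 hχ2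
  rw [ZMod.card, e1, e2] at hprod
  refine ⟨2 * (-1 + 3 * v) - 3 * (v - u), v - u, ?_, by omega, ?_⟩
  · have : (p : ℂ) = ((-1 + 3 * v) ^ 2 - (-1 + 3 * v) * (3 * (v - u)) + (3 * (v - u)) ^ 2 : ℂ) := by
      rw [← hprod]
      linear_combination ((-1 + 3 * v) * (3 * (v - u)) : ℂ) * hμ2 + (3 * (v - u)) ^ 2 * hμ3
    have : (p : ℤ) = (-1 + 3 * v) ^ 2 - (-1 + 3 * v) * (3 * (v - u)) + (3 * (v - u)) ^ 2 := by
      exact_mod_cast this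
    rw [this]; ring
  · rw [e1, e2]
    push_cast
    linear_combination (3 * (v - u) : ℂ) * hμ2

/-- ordered pairs with x y (x + y) = 1 -/
def auxT (p : ℕ) [Fact p.Prime] : Finset (ZMod p × ZMod p) :=
  Finset.univ.filter (fun q => q.1 * q.2 * (q.1 + q.2) = 1)

theorem auxT_card (χ : MulChar (ZMod p) ℂ) (hp1 : p % 3 = 1) (hχ : orderOf χ = 3) :
    ((auxT p).card : ℂ) = p - 2 + (jacobiSum χ χ + jacobiSum χ⁻¹ χ⁻¹) := by
  have h1 : (auxT p).card = ∑ t : ZMod p,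
      (Finset.univ.filter (fun u : ZMod p => u ^ 3 * (t * (1 - t)) = 1)).card := by
    rw [← Finset.card_sigma]
    refine Finset.card_bij' (fun q _ => ⟨- q.2 / q.1, - q.1⟩) (fun s _ => (- s.2, s.1 * s.2))
      ?_ ?_ ?_ ?_
    · rintro ⟨x, y⟩ h
      simp only [auxT, Finset.mem_filter, Finset.mem_univ, true_and] at h
      have hx : x ≠ 0 := by rintro rfl; simp at h
      simp only [Finset.mem_sigma, Finset.mem_univ, Finset.mem_filter, true_and]
      field_simp
      linear_combination h
    · rintro ⟨t, u⟩ h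
      simp only [Finset.mem_sigma, Finset.mem_univ, Finset.mem_filter, true_and] at h
      simp only [auxT, Finset.mem_filter, Finset.mem_univ, true_and]
      linear_combination h
    · rintro ⟨x, y⟩ h
      simp only [auxT, Finset.mem_filter, Finset.mem_univ, true_and] at h
      have hx : x ≠ 0 := by rintro rfl; simp at h
      simp only [Prod.mk.injEq]
      constructor
      · ring
      · field_simp
    · rintro ⟨t, u⟩ h
      simp only [Finset.mem_sigma, Finset.mem_univ, Finset.mem_filter, true_and] at h
      have hx : u ≠ 0 := by rintro rfl; simp at h
      have : -(t * u) / -u = t := by field_simp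
      simp [this]
  rw [h1, Nat.cast_sum, Finset.sum_congr rfl (fun t _ => aux_cubes hp1 χ hχ (t * (1 - t)))]
  simp only [map_mul, Finset.sum_add_distrib]
  have := jacobiSum_one_one (F := ZMod p) (R := ℂ)
  rw [ZMod.card] at this
  rw [← this]
  simp only [jacobiSum]
  ring

/-- the set of values of x^2 + 1/x -/
def auxV (p : ℕ) [Fact p.Prime] : Finset (ZMod p) :=
  (Finset.univ.filter (fun x : ZMod p => x ≠ 0)).image (fun x => x ^ 2 + x⁻¹)

theorem aux_fiber (hp1 : p % 3 = 1) (b : ZMod p) (hb : b ∈ auxV p) :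
    3 * ((Finset.univ.filter (fun x : ZMod p => x ≠ 0)).filter
        (fun x => x ^ 2 + x⁻¹ = b)).card =
      3 + ((auxT p).filter (fun q => q.1 ^ 2 + q.1⁻¹ = b)).card := by
  have hpp : p.Prime := Fact.out
  have h3 : (3 : ZMod p) ≠ 0 := by
    intro h
    have : ((3 : ℕ) : ZMod p) = 0 := by exact_mod_cast h
    rw [ZMod.natCast_eq_zero_iff] at this
    have := (Nat.prime_dvd_prime_iff_eq hpp Nat.prime_three).mp this
    omega
  -- roots
  have hroot : ∀ x : ZMod p, x ∈ ((Finset.univ.filter (fun x : ZMod p => x ≠ 0)).filter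
        (fun x => x ^ 2 + x⁻¹ = b)) ↔ x ^ 3 + 1 = b * x := by
    intro x
    simp only [Finset.mem_filter, Finset.mem_univ, true_and]
    constructor
    · rintro ⟨h0, h⟩
      rw [← h]; field_simp
    · intro h
      have h0 : x ≠ 0 := by rintro rfl; simp at h
      refine ⟨h0, ?_⟩
      field_simp
      linear_combination h
  have hpair : ∀ q : ZMod p × ZMod p, q ∈ ((auxT p).filter (fun q => q.1 ^ 2 + q.1⁻¹ = b)) ↔
      q.1 * q.2 * (q.1 + q.2) = 1 ∧ q.1 ^ 3 + 1 = b * q.1 := by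
    intro q
    rw [← hroot]
    simp only [auxT, Finset.mem_filter, Finset.mem_univ, true_and]
    constructor
    · rintro ⟨h1, h2⟩
      refine ⟨h1, ?_, h2⟩
      intro h; rw [h] at h1; simp at h1
    · rintro ⟨h1, _, h2⟩
      exact ⟨h1, h2⟩
  obtain ⟨x, hx⟩ : ∃ x : ZMod p, x ^ 3 + 1 = b * x := by
    simp only [auxV, Finset.mem_image] at hb
    obtain ⟨x, hx, rfl⟩ := hb
    refine ⟨x, ?_⟩
    rw [← hroot]
    simpa using hx
  have hx0 : x ≠ 0 := by rintro rfl; simp at hx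
  by_cases hex : ∃ u v : ZMod p, u * v * (u + v) = 1 ∧ u ^ 3 + 1 = b * u
  · -- full splitting
    have split : ∀ u v : ZMod p, u * v * (u + v) = 1 → u ^ 3 + 1 = b * u →
        ∀ y, y ^ 3 + 1 = b * y ↔ y = u ∨ y = v ∨ y = -(u + v) := by
      intro u v h1 h2 y
      have hu : u ≠ 0 := by rintro rfl; simp at h1
      have hbe : b = u ^ 2 + u * v + v ^ 2 := by
        apply mul_right_cancel₀ hu
        linear_combination -h2 - h1
      have : y ^ 3 + 1 - b * y = (y - u) * ((y - v) * (y + (u + v))) := by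
        rw [hbe]; linear_combination -h1
      rw [← sub_eq_zero, this, mul_eq_zero, mul_eq_zero, sub_eq_zero, sub_eq_zero,
        add_eq_zero_iff_eq_neg]
    have dbl : ∀ u : ZMod p, u * u * (u + u) = 1 → u ^ 3 + 1 = b * u → 
      3 * ((Finset.univ.filter (fun x : ZMod p => x ≠ 0)).filter
        (fun x => x ^ 2 + x⁻¹ = b)).card =
      3 + ((auxT p).filter (fun q => q.1 ^ 2 + q.1⁻¹ = b)).card := by
      intro u h1 h2
      have hu : u ≠ 0 := by rintro rfl; simp at h1
      have hne : u ≠ -(u + u) := by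
        intro h
        have : 3 * u = 0 := by linear_combination h
        exact (mul_ne_zero h3 hu) this
      have hR : ((Finset.univ.filter (fun x : ZMod p => x ≠ 0)).filter
        (fun x => x ^ 2 + x⁻¹ = b)) = {u, -(u + u)} := by
        ext y
        rw [hroot, split u u h1 h2]
        simp
      have hP : ((auxT p).filter (fun q => q.1 ^ 2 + q.1⁻¹ = b)) =
          {(u, u), (u, -(u + u)), (-(u + u), u)} := by
        ext ⟨s, t⟩
        rw [hpair]
        simp only [Finset.mem_insert, Finset.mem_singleton, Prod.mk.injEq]
        constructor
        · rintro ⟨g1, g2⟩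
          have hs := (split u u h1 h2 s).mp g2
          have ht : (t - u) * (t - s) = 0 ∨ t = -(u+u) := by
            rcases hs with rfl | rfl | rfl
            · have : s * ((t - s) * (t + (s + s))) = 0 := by linear_combination g1 - h1
              rcases mul_eq_zero.mp ((mul_eq_zero.mp this).resolve_left hu) with h | h
              · left; rw [h]; ring
              · right; linear_combination h
            · have : s * ((t - s) * (t + (s + s))) = 0 := by linear_combination g1 - h1
              rcases mul_eq_zero.mp ((mul_eq_zero.mp this).resolve_left hu) with h | h
              · left; rw [h]; ring
              · right; linear_combination h
            · left
              have h2u : (2 * u) ≠ 0 := by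
                intro h; apply one_ne_zero (α := ZMod p)
                rw [← h1]; linear_combination u ^ 2 * h
              have : (2 * u) * ((t - u) * (t - u)) = 0 := by linear_combination -g1 + h1
              have := (mul_eq_zero.mp this).resolve_left h2u
              have : t - u = 0 := by simpa using this
              rw [this]; ring
          rcases hs with rfl | rfl | rfl
          · rcases ht with h | h
            · have : t - s = 0 := by simpa using h
              left; exact ⟨rfl, sub_eq_zero.mp this⟩
            · right; left; exact ⟨rfl, h⟩
          · rcases ht with h | h
            · have : t - s = 0 := by simpa using h
              left; exact ⟨rfl, sub_eq_zero.mp this⟩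
            · right; left; exact ⟨rfl, h⟩
          · right; right
            refine ⟨rfl, ?_⟩
            rcases ht with h | h
            · rcases mul_eq_zero.mp h with h | h
              · exact sub_eq_zero.mp h
              · exfalso
                have e : t = -(u + u) := sub_eq_zero.mp h
                rw [e] at g1
                have : (9 : ZMod p) = 0 := by linear_combination -8 * h1 - g1
                exact (mul_ne_zero h3 h3) (by linear_combination this)
            · exfalso
              rw [h] at g1
              have : (9 : ZMod p) = 0 := by linear_combination -8 * h1 - g1
              exact (mul_ne_zero h3 h3) (by linear_combination this)
        · rintro (⟨rfl, rfl⟩ | ⟨rfl, rfl⟩ | ⟨rfl, rfl⟩)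
          · exact ⟨h1, h2⟩
          · exact ⟨by linear_combination h1, h2⟩
          · exact ⟨by linear_combination h1, (split _ _ h1 h2 _).mpr (by simp)⟩
      rw [hR, hP, Finset.card_pair hne, Finset.card_insert_of_notMem, Finset.card_pair]
      · intro h
        exact hne (Prod.mk.inj h).1
      · simp only [Finset.mem_insert, Finset.mem_singleton, Prod.mk.injEq, not_or]
        exact ⟨fun h => hne h.2, fun h => hne h.1⟩
    obtain ⟨u, v, h1, h2⟩ := hex
    have hsp := split u v h1 h2
    by_cases huv : u = v
    · subst huv; exact dbl u h1 h2
    by_cases huw : u = -(u + v)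
    · refine dbl u ?_ h2
      have : v = -(u + u) := by linear_combination huw
      rw [this] at h1; linear_combination h1
    by_cases hvw : v = -(u + v)
    · refine dbl v ?_ ((hsp v).mpr (by simp))
      have : u = -(v + v) := by linear_combination hvw
      rw [this] at h1; linear_combination h1
    set w := -(u + v) with hw
    have hR : ((Finset.univ.filter (fun x : ZMod p => x ≠ 0)).filter
        (fun x => x ^ 2 + x⁻¹ = b)) = {u, v, w} := by
      ext y
      rw [hroot, hsp]
      simp
    have hP : ((auxT p).filter (fun q => q.1 ^ 2 + q.1⁻¹ = b)) =
        ({u, v, w} : Finset (ZMod p)).offDiag := by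
      rw [← hR]
      ext ⟨s, t⟩
      rw [hpair, Finset.mem_offDiag, hroot, hroot]
      simp only
      constructor
      · rintro ⟨g1, g2⟩
        have hsp2 := split s t g1 g2
        refine ⟨g2, (hsp2 t).mpr (by simp), ?_⟩
        rintro rfl
        -- only two roots, contradiction with three distinct
        have a1 := (hsp2 u).mp ((hsp u).mpr (by simp))
        have a2 := (hsp2 v).mp ((hsp v).mpr (by simp))
        have a3 := (hsp2 w).mp ((hsp w).mpr (by simp))
        clear_value w
        grind
      · rintro ⟨g1, g2, hne⟩
        refine ⟨?_, g1⟩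
        have : (s - t) * (s * t * (s + t) - 1) = 0 := by
          linear_combination t * g1 - s * g2
        exact sub_eq_zero.mp ((mul_eq_zero.mp this).resolve_left (sub_ne_zero.mpr hne))
    have hc3 : ({u, v, w} : Finset (ZMod p)).card = 3 := Finset.card_eq_three.mpr
      ⟨u, v, w, huv, huw, hvw, rfl⟩
    rw [hP, hR, Finset.offDiag_card, hc3]
  · have hP : ((auxT p).filter (fun q => q.1 ^ 2 + q.1⁻¹ = b)) = ∅ := by
      ext q
      rw [hpair]
      simp only [Finset.notMem_empty, iff_false]
      intro h
      exact hex ⟨q.1, q.2, h⟩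
    have hR : ((Finset.univ.filter (fun x : ZMod p => x ≠ 0)).filter
        (fun x => x ^ 2 + x⁻¹ = b)) = {x} := by
      ext y
      rw [hroot, Finset.mem_singleton]
      constructor
      · intro hy
        by_contra hne
        apply hex
        refine ⟨x, y, ?_, hx⟩
        have : (x - y) * (x * y * (x + y) - 1) = 0 := by
          linear_combination y * hx - x * hy
        exact sub_eq_zero.mp ((mul_eq_zero.mp this).resolve_left (sub_ne_zero.mpr (Ne.symm hne)))
      · rintro rfl; exact hx
    rw [hP, hR]; simp

theorem auxV_card (hp1 : p % 3 = 1) : 3 * (p - 1) = 3 * (auxV p).card + (auxT p).card := by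
  have h1 : (Finset.univ.filter (fun x : ZMod p => x ≠ 0)).card = p - 1 := by
    rw [Finset.filter_ne', Finset.card_erase_of_mem (Finset.mem_univ _), Finset.card_univ, ZMod.card]
  have h2 : (Finset.univ.filter (fun x : ZMod p => x ≠ 0)).card = ∑ b ∈ auxV p, _ :=
    Finset.card_eq_sum_card_image (fun x : ZMod p => x ^ 2 + x⁻¹) _
  have h3 : (auxT p).card = ∑ b ∈ auxV p,
      ((auxT p).filter (fun q => q.1 ^ 2 + q.1⁻¹ = b)).card := by
    apply Finset.card_eq_sum_card_fiberwise
    intro q hq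
    simp only [auxT, Finset.coe_filter, Finset.mem_univ, true_and, Set.mem_ofPred_eq] at hq
    have : q.1 ≠ 0 := by intro h; rw [h] at hq; simp at hq
    exact Finset.mem_coe.mpr (Finset.mem_image.mpr ⟨q.1, by simpa using this, rfl⟩)
  rw [← h1, h2, h3, Finset.mul_sum, Finset.sum_congr rfl (fun b hb => aux_fiber hp1 b hb),
    Finset.sum_add_distrib]
  simp [mul_comm]

theorem aux_transfer (e : ℕ) (P : ZMod p → Prop) [DecidablePred P]
    (hP : ∀ b, P b ↔ ∃ x : ZMod p, x ≠ 0 ∧ x ^ 3 + 1 = b * x ^ e) :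
    ((Finset.range p).filter (fun b : ℕ =>
      ∃ x ∈ Finset.Icc 1 (p - 1),
        (x : ℤ) ^ 3 + (1) ≡ (b : ℤ) * (x : ℤ) ^ e [ZMOD (p : ℤ)])).card =
    (Finset.univ.filter P).card := by
  have hpp : p.Prime := Fact.out
  have key : ∀ b : ℕ, (∃ x ∈ Finset.Icc 1 (p - 1),
        (x : ℤ) ^ 3 + (1) ≡ (b : ℤ) * (x : ℤ) ^ e [ZMOD (p : ℤ)]) ↔ P (b : ZMod p) := by
    intro b
    rw [hP]
    have tr : ∀ x : ℕ, ((x : ℤ) ^ 3 + (1) ≡ (b : ℤ) * (x : ℤ) ^ e [ZMOD (p : ℤ)]) ↔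
        (x : ZMod p) ^ 3 + 1 = b * (x : ZMod p) ^ e := by
      intro x
      rw [← ZMod.intCast_eq_intCast_iff]
      push_cast
      rfl
    constructor
    · rintro ⟨x, hx, h⟩
      rw [Finset.mem_Icc] at hx
      refine ⟨x, ?_, (tr x).mp h⟩
      intro h0
      rw [ZMod.natCast_eq_zero_iff] at h0
      have := Nat.le_of_dvd (by omega) h0
      omega
    · rintro ⟨x, hx, h⟩
      refine ⟨x.val, ?_, (tr _).mpr (by simpa using h)⟩
      rw [Finset.mem_Icc]
      have h1 := ZMod.val_lt x
      have h2 : x.val ≠ 0 := by simpa using hx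
      omega
  refine Finset.card_bij' (fun b _ => (b : ZMod p)) (fun b _ => b.val) ?_ ?_ ?_ ?_
  · intro b hb
    rw [Finset.mem_filter] at hb
    simpa using (key b).mp hb.2
  · intro b hb
    rw [Finset.mem_filter] at hb ⊢
    refine ⟨Finset.mem_range.mpr (ZMod.val_lt b), (key _).mpr ?_⟩
    simpa using hb.2
  · intro b hb
    rw [Finset.mem_filter, Finset.mem_range] at hb
    exact ZMod.val_cast_of_lt hb.1
  · intro b _
    simp

end


theorem stmt_6 (p : ℕ) (hp : p.Prime) (hp1 : p % 3 = 1)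
    (L M : ℤ) (hpLM : 4 * (p : ℤ) = L ^ 2 + 27 * M ^ 2) (hL : L % 3 = 1) :
    L = 2 * (p : ℤ) - 1 - 3 * (((Finset.range p).filter (fun b : ℕ =>
      ∃ x ∈ Finset.Icc 1 (p - 1),
        (x : ℤ) ^ 3 + (1) ≡ (b : ℤ) * (x : ℤ) [ZMOD (p : ℤ)])).card : ℤ) ∧
    L = 2 * (p : ℤ) - 1 - 3 * (((Finset.range p).filter (fun b : ℕ =>
      ∃ x ∈ Finset.Icc 1 (p - 1),
        (x : ℤ) ^ 3 + (1) ≡ (b : ℤ) * (x : ℤ) ^ 2 [ZMOD (p : ℤ)])).card : ℤ) := by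
  haveI : Fact p.Prime := ⟨hp⟩
  obtain ⟨χ, hχ⟩ := MulChar.exists_mulChar_orderOf (ZMod p) (R := ℂ) (n := 3)
    (by rw [ZMod.card]; omega) (Complex.isPrimitiveRoot_exp 3 (by norm_num))
  obtain ⟨L', M', h1, h2, h3⟩ := aux_jacobi hp1 χ hχ
  have hLL : L = L' := aux_unique p hp L M L' M' hpLM h1 hL h2
  have hT := auxT_card χ hp1 hχ
  rw [h3, ← hLL] at hT
  have hT' : ((auxT p).card : ℤ) = p - 2 + L := by exact_mod_cast hT
  have hV := auxV_card (p := p) hp1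
  have hp2 := hp.two_le
  have hfin : L = 2 * (p : ℤ) - 1 - 3 * ((auxV p).card : ℤ) := by omega
  have hA : auxV p = Finset.univ.filter (· ∈ auxV p) := by simp
  constructor
  · have := aux_transfer (p := p) 1 (· ∈ auxV p) (by
      intro b
      simp only [auxV, Finset.mem_image, Finset.mem_filter, Finset.mem_univ, true_and]
      refine exists_congr fun x => and_congr_right fun hx => ?_
      constructor
      · rintro rfl; field_simp
      · intro h; field_simp; linear_combination h)
    simp only [pow_one] at this
    rw [this, ← hA]
    exact hfin
  · have := aux_transfer (p := p) 2 (· ∈ auxV p) (by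
      intro b
      simp only [auxV, Finset.mem_image, Finset.mem_filter, Finset.mem_univ, true_and]
      constructor
      · rintro ⟨x, hx, rfl⟩
        refine ⟨x⁻¹, inv_ne_zero hx, ?_⟩
        field_simp
        try ring
      · rintro ⟨x, hx, h⟩
        refine ⟨x⁻¹, inv_ne_zero hx, ?_⟩
        field_simp
        linear_combination h)
    rw [this, ← hA]
    exact hfin
end
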